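/- arXiv:1808.04923 — 2 statements merged into one kernel-verified Lean document; each statement's English description precedes it below -/
import Mathlib

section
/- The lower limit liminf_{n→∞} H(n)^{1/n} is strictly greater than 1.901448, and the upper limit limsup_{n→∞} H(n)^{1/n} is strictly less than 1.925556. -/
/-!
Let `P` be the probability that a uniformly random subset of `{1, …, n}` contains no forbidden
triple `{a, a r, a r²}`, so that `H n = 2 ^ n * P` (`H_eq`). The theorem amounts to linear bounds
`0.05472… n ≤ -log₂ P ≤ 0.07290… n`, up to an additive constant. Throughout, logarithmic quantities
are measured in units of `1 / 10000` of a bit, so that they can be kept as natural numbers.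

Every `a ≥ 1` is uniquely `a = k t` with `k = core a` coprime to `6` and `t` a 3-smooth number.
This groups the triples according to the core `k` of their first term (`cone`). For both bounds the
contribution of a core is controlled by `n / k` alone, and the cores with `x ≤ n / k < y` have
density `(1 / x - 1 / y) / 3` (`count_cores`).

*Upper bound for `H`.* Keep only the triples with 3-smooth ratio `r`; those belonging to different
cores involve disjoint sets of integers, so their avoidance events are independent (`pFree_coneU`).
For a core with `x ≤ n / k`, the avoidance probability is at most the one for the finitely many
triples inside the 3-smooth numbers up to `x`, dilated by `k`; this finite probability is bounded
above numerically for 18 values of `x` (`coneU_entry`, `upper_main`).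

*Lower bound for `H`.* Avoidance events are decreasing, hence positively correlated by the
Harris–Kleitman inequality (`pFree_harris`). Grouping the triples by their first term `a` alone,
with `m + 1 = ⌊√(n / a)⌋`, conditioning on `a` and applying Harris again to the pairs
`{a r, a r²}` gives the factor `(1 + (3 / 4) ^ m) / 2` (`star_bound`); the product over all `a`
is the default estimate (`starRate`). For `x ≤ n / k < y`, with `[x, y)` one of 26 ranges, all the
triples with first term of core `k` lie among the dilates by `k` of the triples with 3-smooth
first term and last term less than `y`, and a numerical lower bound for the probability of
avoiding these beats the default (`cone_entry`, `lower_main`).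

*The numerical bounds.* Both finite probabilities are estimated by the same procedure `tree`: branch
on whether a prescribed list of vertices is in the random set, and at each leaf bound the remaining
avoidance probability, below by Harris (`leafLow`) or above by a greedily chosen disjoint subfamily
(`leafUp`). The arithmetic is fixed point, rounded in the safe direction (`tree_sound`), and the
procedure is evaluated inside the kernel on the tables `lowEntries` and `upEntries`.
-/

/-- A finite set of positive integers is free of 3-term geometric progressions with
integral ratio if it contains no three elements `a, a*r, a*r^2` with `a ≥ 1`, `r ≥ 2`. -/
def GPFree (S : Finset ℕ) : Prop :=
  ¬ ∃ a r : ℕ, 0 < a ∧ 2 ≤ r ∧ a ∈ S ∧ a * r ∈ S ∧ a * r ^ 2 ∈ S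

/-- `H n` is the number of geometric-progression-free subsets of `{1, 2, …, n}`. -/
noncomputable def H (n : ℕ) : ℕ :=
  Nat.card {S : Finset ℕ // S ⊆ Finset.Icc 1 n ∧ GPFree S}

/-! ### Avoidance probabilities -/

/-- The number of subsets of `U` that contain no member of the family `C`. The members of `C`
are called clauses. -/
noncomputable def cntFree (U : Finset ℕ) (C : Set (Set ℕ)) : ℕ := by
  classical exact (U.powerset.filter (fun S : Finset ℕ => ∀ c ∈ C, ¬ c ⊆ (S : Set ℕ))).card

/-- The probability that a uniformly random subset of `U` contains no clause of `C`. -/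
noncomputable def pFree (U : Finset ℕ) (C : Set (Set ℕ)) : ℝ := cntFree U C / 2 ^ U.card

/-- Splitting according to whether `v` is chosen: without `v`, clauses through `v` are harmless;
with `v`, every clause `c` shrinks to `c \ {v}`. -/
theorem cntFree_insert {W : Finset ℕ} {v : ℕ} (hv : v ∉ W) (C : Set (Set ℕ)) :
    cntFree (insert v W) C = cntFree W {c ∈ C | v ∉ c} + cntFree W ((· \ {v}) '' C) := by
  classical
  unfold cntFree
  rw [Finset.powerset_insert, Finset.filter_union, Finset.card_union_of_disjoint]
  · congr 1
    · congr 1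
      apply Finset.filter_congr
      intro S hS
      have hvS : v ∉ S := fun h => hv (Finset.mem_powerset.1 hS h)
      constructor
      · rintro h c ⟨hc, -⟩; exact h c hc
      · intro h c hc hcS
        exact h c ⟨hc, fun hvc => hvS (by simpa using hcS hvc)⟩ hcS
    · rw [Finset.filter_image, Finset.card_image_of_injOn]
      · congr 1
        apply Finset.filter_congr
        intro S hS
        simp only [Set.mem_image, forall_exists_index, and_imp, forall_apply_eq_imp_iff₂,
          Finset.coe_insert, Set.sdiff_singleton_subset_iff]
      · intro S hS T hT h
        have hS' : v ∉ S := fun h => hv (by simp at hS; exact hS.1 h)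
        have hT' : v ∉ T := fun h => hv (by simp at hT; exact hT.1 h)
        have := congrArg (fun X => X.erase v) h
        simpa [Finset.erase_insert hS', Finset.erase_insert hT'] using this
  · rw [Finset.disjoint_left]
    intro S hS hS'
    simp only [Finset.mem_filter, Finset.mem_powerset, Finset.mem_image] at hS hS'
    obtain ⟨⟨T, -, rfl⟩, -⟩ := hS'
    exact hv (hS.1 (Finset.mem_insert_self _ _))

theorem pFree_nonneg (U : Finset ℕ) (C : Set (Set ℕ)) : 0 ≤ pFree U C := by
  unfold pFree; positivity

theorem cntFree_mono (U : Finset ℕ) {C D : Set (Set ℕ)} (h : ∀ c ∈ C, ∃ d ∈ D, d ⊆ c) :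
    cntFree U D ≤ cntFree U C := by
  classical
  unfold cntFree
  apply Finset.card_le_card
  intro S hS
  simp only [Finset.mem_filter] at hS ⊢
  refine ⟨hS.1, fun c hc hcS => ?_⟩
  obtain ⟨d, hd, hdc⟩ := h c hc
  exact hS.2 d hd (hdc.trans hcS)

/-- Shrinking clauses or adding new ones makes avoidance less likely. -/
theorem pFree_mono (U : Finset ℕ) {C D : Set (Set ℕ)} (h : ∀ c ∈ C, ∃ d ∈ D, d ⊆ c) :
    pFree U D ≤ pFree U C := by
  unfold pFree
  have := cntFree_mono U h
  gcongr

theorem pFree_anti (U : Finset ℕ) {C D : Set (Set ℕ)} (h : C ⊆ D) :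
    pFree U D ≤ pFree U C := pFree_mono U fun c hc => ⟨c, h hc, subset_rfl⟩

theorem pFree_empty (U : Finset ℕ) : pFree U ∅ = 1 := by
  classical
  simp [pFree, cntFree]

theorem pFree_of_empty_mem (U : Finset ℕ) {C : Set (Set ℕ)} (h : ∅ ∈ C) : pFree U C = 0 := by
  classical
  have : cntFree U C = 0 := by
    unfold cntFree
    rw [Finset.card_eq_zero, Finset.filter_eq_empty_iff]
    intro S _ hS
    exact hS ∅ h (Set.empty_subset _)
  simp [pFree, this]

theorem sdiff_image_eq_self {C : Set (Set ℕ)} {v : ℕ} (h : ∀ c ∈ C, v ∉ c) :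
    (· \ {v}) '' C = C := by
  ext s
  simp only [Set.mem_image]
  constructor
  · rintro ⟨c, hc, rfl⟩; rwa [Set.sdiff_singleton_eq_self (h c hc)]
  · intro hs; exact ⟨s, hs, Set.sdiff_singleton_eq_self (h s hs)⟩

theorem pFree_insert {W : Finset ℕ} {v : ℕ} (hv : v ∉ W) {C : Set (Set ℕ)}
    (h : ∀ c ∈ C, v ∉ c) : pFree (insert v W) C = pFree W C := by
  have h1 : {c ∈ C | v ∉ c} = C := by ext c; simpa using h c
  unfold pFree
  rw [cntFree_insert hv, h1, sdiff_image_eq_self h, Finset.card_insert_of_notMem hv, pow_succ]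
  push_cast; field_simp; ring

/-- Conditioning on whether `v` is in the random set. -/
theorem pFree_branch {U : Finset ℕ} {v : ℕ} (hv : v ∈ U) (C : Set (Set ℕ)) :
    pFree U C = (pFree U {c ∈ C | v ∉ c} + pFree U ((· \ {v}) '' C)) / 2 := by
  obtain ⟨W, hW, rfl⟩ : ∃ W, v ∉ W ∧ U = insert v W :=
    ⟨U.erase v, Finset.notMem_erase _ _, (Finset.insert_erase hv).symm⟩
  rw [pFree_insert hW (C := {c ∈ C | v ∉ c}) (fun c hc => hc.2),
    pFree_insert hW (C := (· \ {v}) '' C) (by rintro _ ⟨c, -, rfl⟩; simp)]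
  unfold pFree
  rw [cntFree_insert hW, Finset.card_insert_of_notMem hW, pow_succ]
  push_cast; field_simp

/-- Only the integers that occur in clauses matter for the probability. -/
theorem pFree_superset {U V : Finset ℕ} (hUV : U ⊆ V) {C : Set (Set ℕ)}
    (h : ∀ c ∈ C, c ⊆ (U : Set ℕ)) : pFree V C = pFree U C := by
  classical
  have key : ∀ D : Finset ℕ, Disjoint D U → pFree (D ∪ U) C = pFree U C := by
    intro D
    induction D using Finset.induction_on with
    | empty => intro _; rw [Finset.empty_union]
    | insert v D hv ih =>
      intro hd
      rw [Finset.disjoint_insert_left] at hd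
      rw [Finset.insert_union, pFree_insert, ih hd.2]
      · simp [hv, hd.1]
      · intro c hc hvc; exact hd.1 (by simpa using h c hc hvc)
  have := key (V \ U) Finset.sdiff_disjoint
  rwa [Finset.sdiff_union_of_subset hUV] at this

/-- A singleton clause `{u}` forces `u` out of the random set. -/
theorem pFree_forced {U : Finset ℕ} {u : ℕ} (hu : u ∈ U) {C : Set (Set ℕ)} (h : {u} ∈ C) :
    pFree U C = pFree U {c ∈ C | u ∉ c} / 2 := by
  rw [pFree_branch hu, pFree_of_empty_mem (C := (· \ {u}) '' C) U ⟨{u}, h, by simp⟩, add_zero]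

/-- The Harris–Kleitman inequality: avoidance events are down-closed, hence positively
correlated. -/
theorem pFree_harris (U : Finset ℕ) (C D : Set (Set ℕ)) :
    pFree U C * pFree U D ≤ pFree U (C ∪ D) := by
  classical
  set f : Set (Set ℕ) → Finset (Finset ℕ) := fun C =>
    U.powerset.filter (fun S : Finset ℕ => ∀ c ∈ C, ¬ c ⊆ (S : Set ℕ)) with hf
  have low : ∀ C, IsLowerSet ((f C : Finset (Finset ℕ)) : Set (Finset ℕ)) := by
    intro C S T hTS hS
    simp only [hf, Finset.coe_filter, Finset.mem_powerset, Set.mem_ofPred_eq] at hS ⊢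
    exact ⟨hTS.trans hS.1, fun c hc hcT => hS.2 c hc (hcT.trans (by exact_mod_cast hTS))⟩
  have key := (low C).le_card_inter_finset' (low D)
    (s := U) (fun t ht => Finset.mem_powerset.1 (Finset.mem_filter.1 ht).1)
    (fun t ht => Finset.mem_powerset.1 (Finset.mem_filter.1 ht).1)
  have hint : f C ∩ f D = f (C ∪ D) := by
    ext S
    simp only [hf, Finset.mem_inter, Finset.mem_filter, Set.mem_union]
    constructor
    · rintro ⟨⟨a, b⟩, -, c⟩
      exact ⟨a, fun x hx => hx.elim (b x) (c x)⟩
    · rintro ⟨a, b⟩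
      exact ⟨⟨a, fun x hx => b x (Or.inl hx)⟩, a, fun x hx => b x (Or.inr hx)⟩
  rw [hint] at key
  have key' : (cntFree U C : ℝ) * cntFree U D ≤ 2 ^ U.card * cntFree U (C ∪ D) := by
    unfold cntFree; exact_mod_cast key
  unfold pFree
  rw [div_mul_div_comm, div_le_div_iff₀ (by positivity) (by positivity)]
  have : (0:ℝ) < 2 ^ U.card := by positivity
  nlinarith

theorem pFree_harris_biUnion {ι : Type*} (U : Finset ℕ) (s : Finset ι) (C : ι → Set (Set ℕ)) :
    ∏ i ∈ s, pFree U (C i) ≤ pFree U (⋃ i ∈ s, C i) := by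
  classical
  induction s using Finset.induction_on with
  | empty => simp [pFree_empty]
  | insert a s ha ih =>
    rw [Finset.prod_insert ha, Finset.set_biUnion_insert]
    exact (mul_le_mul_of_nonneg_left ih (pFree_nonneg _ _)).trans (pFree_harris _ _ _)

/-- Families of clauses supported on disjoint sets of integers give independent events. The set
`A` may contain the empty clause, in which case both sides vanish. -/
theorem pFree_indep (U V : Finset ℕ) (hV : V ⊆ U) : ∀ (A B : Set (Set ℕ)),
    (∀ a ∈ A, a ⊆ (V : Set ℕ)) → (∀ b ∈ B, Disjoint b (V : Set ℕ)) →
    pFree U (A ∪ B) = pFree U A * pFree U B := by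
  classical
  induction V using Finset.induction_on with
  | empty =>
    intro A B hA _
    by_cases h : ∅ ∈ A
    · rw [pFree_of_empty_mem U h, pFree_of_empty_mem U (Or.inl h), zero_mul]
    · have : A = ∅ := by
        ext a
        simp only [Set.mem_empty_iff_false, iff_false]
        intro ha
        have := hA a ha
        rw [Finset.coe_empty, Set.subset_empty_iff] at this
        exact h (this ▸ ha)
      rw [this, Set.empty_union, pFree_empty, one_mul]
  | insert v V hv ih =>
    intro A B hA hB
    have hvU : v ∈ U := hV (Finset.mem_insert_self _ _)
    have hVU : V ⊆ U := (Finset.subset_insert _ _).trans hV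
    have hB' : ∀ b ∈ B, v ∉ b ∧ Disjoint b (V : Set ℕ) := by
      intro b hb
      have := hB b hb
      rw [Finset.coe_insert, Set.disjoint_insert_right] at this
      exact this
    have e1 : {c ∈ A ∪ B | v ∉ c} = {c ∈ A | v ∉ c} ∪ B := by
      ext c
      simp only [Set.mem_union, Set.mem_ofPred_eq]
      have := fun h => (hB' c h).1
      tauto
    have e2 : (· \ {v}) '' (A ∪ B) = (· \ {v}) '' A ∪ B := by
      rw [Set.image_union, sdiff_image_eq_self fun b hb => (hB' b hb).1]
    rw [pFree_branch hvU (A ∪ B), pFree_branch hvU A, e1, e2,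
      ih hVU _ _ _ (fun b hb => (hB' b hb).2), ih hVU _ _ _ (fun b hb => (hB' b hb).2)]
    · ring
    · rintro _ ⟨a, ha, rfl⟩
      have := hA a ha
      rw [Finset.coe_insert] at this
      simpa [Set.sdiff_singleton_subset_iff] using this
    · rintro a ⟨ha, hva⟩
      have := hA a ha
      rw [Finset.coe_insert] at this
      exact (Set.subset_insert_iff_of_notMem hva).1 this

theorem pFree_single (U V : Finset ℕ) (hV : V ⊆ U) :
    pFree U {(V : Set ℕ)} = 1 - (1 / 2) ^ V.card := by
  classical
  induction V using Finset.induction_on with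
  | empty => rw [pFree_of_empty_mem U (by simp)]; simp
  | insert v V hv ih =>
    rw [pFree_branch (hV (Finset.mem_insert_self _ _))]
    have e1 : {c ∈ ({((insert v V : Finset ℕ) : Set ℕ)} : Set (Set ℕ)) | v ∉ c} = ∅ := by
      ext c
      simp only [Set.mem_singleton_iff, Set.mem_ofPred_eq, Set.mem_empty_iff_false, iff_false]
      rintro ⟨rfl, h⟩; simp at h
    have e2 : (· \ {v}) '' ({((insert v V : Finset ℕ) : Set ℕ)} : Set (Set ℕ)) = {(V : Set ℕ)} := by
      rw [Set.image_singleton, Finset.coe_insert, Set.insert_sdiff_of_mem _ (by simp),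
        Set.sdiff_singleton_eq_self (by simpa using hv)]
    rw [e1, e2, pFree_empty, ih ((Finset.subset_insert _ _).trans hV),
      Finset.card_insert_of_notMem hv, pow_succ]
    ring

theorem pFree_single_ncard (U : Finset ℕ) {c : Set ℕ} (hc : c ⊆ (U : Set ℕ)) :
    pFree U {c} = 1 - (1 / 2) ^ c.ncard := by
  classical
  obtain ⟨V, rfl⟩ := (U.finite_toSet.subset hc).exists_finset_coe
  rw [pFree_single U V (by exact_mod_cast hc), Set.ncard_coe_finset]

/-! ### Numerical estimates by branching -/

/-- Clauses are encoded as bit masks; `hit b c` tests whether the masks `b` and `c` meet. -/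
def hit (b c : ℕ) : Bool := !(Nat.beq (Nat.land c b) 0)

/-- The masks in `C` disjoint from `b`. -/
def avoid (b : ℕ) (C : List ℕ) : List ℕ := C.filter (fun c => Nat.beq (Nat.land c b) 0)

/-- The masks in `C` meeting `b`, each with the bits of `b` flipped. For `b = 2 ^ v` this removes
`v` from the clauses containing it. -/
def resid (b : ℕ) (C : List ℕ) : List ℕ := (C.filter (hit b)).map (fun c => Nat.xor c b)

/-- Run through the list `Q` of singleton clauses, each of which forces its vertex out of the random
set. The mask `F` collects the vertices excluded so far and `j` counts them; in the end the value of
`f` on the clauses avoiding `F` is scaled by `2 ^ (-j)`, rounding down for `e = 0` and up for `e = 1`. -/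
def force (e : ℕ) (f : List ℕ → List ℕ → ℕ) : List ℕ → ℕ → List ℕ → List ℕ → ℕ → ℕ
  | [], F, C3, C2, j => f (avoid F C3) (avoid F C2) / 2 ^ j + e
  | q :: Q, F, C3, C2, j =>
    cond (hit F q) (force e f Q F C3 C2 j) (force e f Q (Nat.lor F q) C3 C2 (j + 1))

/-- Fixed-point estimate, in units of `2 ^ (-60)`, of the probability of avoiding the 3-element
clauses `C3` and the 2-element clauses `C2`. It branches on the vertices of the list `vs` in turn,
skipping those that occur in no clause, and calls `leaf` once the list is exhausted. When a vertex
is chosen, the 2-element clauses through it become singletons, which `force` eliminates. The parameter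
`e` is the rounding mode: `0` for down, `1` for up. -/
def tree (e : ℕ) (leaf : List ℕ → List ℕ → ℕ) : List ℕ → List ℕ → List ℕ → ℕ
  | [], C3, C2 => leaf C3 C2
  | v :: vs, C3, C2 =>
    cond (C3.any (hit (2 ^ v)) || C2.any (hit (2 ^ v)))
      ((tree e leaf vs (avoid (2 ^ v) C3) (avoid (2 ^ v) C2) +
        force e (tree e leaf vs) (resid (2 ^ v) C2) 0 (avoid (2 ^ v) C3)
          (resid (2 ^ v) C3 ++ avoid (2 ^ v) C2) 0) / 2 ^ 1 + e)
      (tree e leaf vs C3 C2)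

/-- The lower bound `(7 / 8) ^ |C3| * (3 / 4) ^ |C2|` given by Harris's inequality, in units of
`2 ^ (-60)` and rounded down. -/
def leafLow (C3 C2 : List ℕ) : ℕ :=
  7 ^ C3.length * 3 ^ C2.length * 2 ^ 60 / 2 ^ (3 * C3.length + 2 * C2.length) + 0

/-- Greedily selects clauses from a list of 3-element clauses, skipping those that meet the mask
`F` of vertices already used; `a` and `b` count the selected clauses of size 2 and 3. Returns
`(7 / 8) ^ b * (3 / 4) ^ a` in units of `2 ^ (-60)`, rounded up. -/
def up3 : List ℕ → ℕ → ℕ → ℕ → ℕ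
  | [], _, a, b => 7 ^ b * 3 ^ a * 2 ^ 60 / 2 ^ (3 * b + 2 * a) + 1
  | c :: C3, F, a, b => cond (hit F c) (up3 C3 F a b) (up3 C3 (Nat.lor F c) a (b + 1))

/-- The same greedy selection, going first through the 2-element clauses and then through the
3-element ones. -/
def up2 : List ℕ → List ℕ → ℕ → ℕ → ℕ → ℕ
  | [], C3, F, a, b => up3 C3 F a b
  | c :: C2, C3, F, a, b => cond (hit F c) (up2 C2 C3 F a b) (up2 C2 C3 (Nat.lor F c) (a + 1) b)

/-- An upper bound for the probability of avoiding `C3` and `C2`, from a greedily chosen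
disjoint subfamily. -/
def leafUp (C3 C2 : List ℕ) : ℕ := up2 C2 C3 0 0 0

/-- The clause encoded by the mask `m`, dilated by `k`: the set of all `k * i` with bit `i` of
`m` set. -/
def cl (k m : ℕ) : Set ℕ := {j | ∃ i, m.testBit i = true ∧ j = k * i}

/-- The family of clauses encoded by a list of masks, dilated by `k`. -/
def fam (k : ℕ) (C : List ℕ) : Set (Set ℕ) := {c | ∃ m ∈ C, c = cl k m}

theorem fam_nil (k : ℕ) : fam k [] = ∅ := by simp [fam]

theorem fam_cons (k m : ℕ) (C : List ℕ) : fam k (m :: C) = {cl k m} ∪ fam k C := by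
  ext c; simp [fam]

theorem fam_append (k : ℕ) (C D : List ℕ) : fam k (C ++ D) = fam k C ∪ fam k D := by
  ext c; simp [fam, or_and_right, exists_or]

theorem cl_zero (k : ℕ) : cl k 0 = ∅ := by simp [cl]

theorem cl_lor (k a b : ℕ) : cl k (Nat.lor a b) = cl k a ∪ cl k b := by
  ext j
  have : ∀ i, (Nat.lor a b).testBit i = (a.testBit i || b.testBit i) := Nat.testBit_or a b
  simp only [cl, this, Bool.or_eq_true, or_and_right, exists_or, Set.mem_ofPred_eq, Set.mem_union]

theorem cl_pow (k v : ℕ) : cl k (2 ^ v) = {k * v} := by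
  ext j
  simp [cl, Nat.testBit_two_pow]

theorem mul_mem_cl {k : ℕ} (hk : 0 < k) (m i : ℕ) : k * i ∈ cl k m ↔ m.testBit i = true := by
  constructor
  · rintro ⟨i', h, e⟩
    rwa [Nat.eq_of_mul_eq_mul_left hk e]
  · intro h; exact ⟨i, h, rfl⟩

theorem cl_xor {k : ℕ} (hk : 0 < k) {c v : ℕ} (h : k * v ∈ cl k c) :
    cl k (Nat.xor c (2 ^ v)) = cl k c \ {k * v} := by
  rw [mul_mem_cl hk] at h
  ext j
  have : ∀ i, (Nat.xor c (2 ^ v)).testBit i = (c.testBit i ^^ (2 ^ v).testBit i) :=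
    Nat.testBit_xor c _
  simp only [cl, this, Nat.testBit_two_pow, Set.mem_ofPred_eq, Set.mem_sdiff,
    Set.mem_singleton_iff]
  constructor
  · rintro ⟨i, hi, rfl⟩
    by_cases hv : v = i
    · subst hv; simp [h] at hi
    · refine ⟨⟨i, by simpa [hv] using hi, rfl⟩, fun e => hv (Nat.eq_of_mul_eq_mul_left hk e).symm⟩
  · rintro ⟨⟨i, hi, rfl⟩, hne⟩
    refine ⟨i, ?_, rfl⟩
    have : v ≠ i := by rintro rfl; exact hne rfl
    simp [this, hi]

theorem land_beq {k : ℕ} (hk : 0 < k) (c b : ℕ) :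
    Nat.beq (Nat.land c b) 0 = true ↔ Disjoint (cl k c) (cl k b) := by
  rw [Nat.beq_eq, Set.disjoint_left]
  have : ∀ i, (Nat.land c b).testBit i = (c.testBit i && b.testBit i) := Nat.testBit_and c b
  constructor
  · rintro h _ ⟨i, hi, rfl⟩ hb
    rw [mul_mem_cl hk] at hb
    have := this i
    rw [h, hi, hb] at this
    simp at this
  · intro h
    apply Nat.eq_of_testBit_eq
    intro i
    rw [this]
    have := @h (k * i)
    rw [mul_mem_cl hk, mul_mem_cl hk] at this
    simpa using this

theorem hit_iff {k : ℕ} (hk : 0 < k) (b c : ℕ) :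
    hit b c = true ↔ ¬ Disjoint (cl k c) (cl k b) := by
  rw [hit, Bool.not_eq_true', ← Bool.not_eq_true, land_beq hk]

theorem fam_avoid {k : ℕ} (hk : 0 < k) (b : ℕ) (C : List ℕ) :
    fam k (avoid b C) = {c ∈ fam k C | Disjoint c (cl k b)} := by
  ext c
  simp only [fam, avoid, List.mem_filter, land_beq hk, Set.mem_ofPred_eq]
  constructor
  · rintro ⟨m, ⟨h1, h2⟩, rfl⟩; exact ⟨⟨m, h1, rfl⟩, h2⟩
  · rintro ⟨⟨m, h1, rfl⟩, h2⟩; exact ⟨m, ⟨h1, h2⟩, rfl⟩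

/-- On masks, deleting `k * v` from every clause amounts to `resid` together with `avoid`. -/
theorem fam_resid {k : ℕ} (hk : 0 < k) (v : ℕ) (C : List ℕ) :
    fam k (resid (2 ^ v) C) ∪ fam k (avoid (2 ^ v) C) = (· \ {k * v}) '' fam k C := by
  rw [fam_avoid hk]
  ext c
  simp only [fam, resid, List.mem_map, List.mem_filter, hit_iff hk, cl_pow,
    Set.disjoint_singleton_right, not_not, Set.mem_union, Set.mem_ofPred_eq, Set.mem_image]
  constructor
  · rintro (⟨_, ⟨m, ⟨h1, h2⟩, rfl⟩, rfl⟩ | ⟨⟨m, h1, rfl⟩, h2⟩)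
    · exact ⟨_, ⟨m, h1, rfl⟩, (cl_xor hk h2).symm⟩
    · exact ⟨_, ⟨m, h1, rfl⟩, Set.sdiff_singleton_eq_self h2⟩
  · rintro ⟨_, ⟨m, h1, rfl⟩, rfl⟩
    by_cases h2 : k * v ∈ cl k m
    · exact Or.inl ⟨_, ⟨m, ⟨h1, h2⟩, rfl⟩, (cl_xor hk h2).symm⟩
    · rw [Set.sdiff_singleton_eq_self h2]
      exact Or.inr ⟨⟨m, h1, rfl⟩, h2⟩

/-- All masks in `C` encode, after dilation by `k`, clauses of size `j` inside `U`. -/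
def WF (U : Finset ℕ) (k j : ℕ) (C : List ℕ) : Prop :=
  ∀ m ∈ C, cl k m ⊆ (U : Set ℕ) ∧ (cl k m).ncard = j

theorem WF.avoid {U : Finset ℕ} {k j : ℕ} {C : List ℕ} (h : WF U k j C) (b : ℕ) :
    WF U k j (avoid b C) := fun m hm => h m (List.mem_of_mem_filter hm)

theorem WF.append {U : Finset ℕ} {k j : ℕ} {C D : List ℕ} (h : WF U k j C) (h' : WF U k j D) :
    WF U k j (C ++ D) := fun m hm => (List.mem_append.1 hm).elim (h m) (h' m)

theorem WF.resid {U : Finset ℕ} {k j : ℕ} (hk : 0 < k) {C : List ℕ} (h : WF U k (j + 1) C)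
    (v : ℕ) : WF U k j (resid (2 ^ v) C) := by
  intro m hm
  simp only [_root_.resid, List.mem_map, List.mem_filter, hit_iff hk, cl_pow,
    Set.disjoint_singleton_right, not_not] at hm
  obtain ⟨c, ⟨hc, hv⟩, rfl⟩ := hm
  obtain ⟨h1, h2⟩ := h c hc
  rw [cl_xor hk hv]
  exact ⟨Set.sdiff_subset.trans h1, by rw [Set.ncard_sdiff_singleton_of_mem hv, h2]; rfl⟩

/-- The sign `σ` belonging to the rounding mode `e`: a certified bound `a` for `x` satisfies
`σ * a ≤ σ * x`, that is `a ≤ x` when rounding down (`e = 0`) and `x ≤ a` when rounding up (`e = 1`). -/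
def Rnd (σ : ℝ) (e : ℕ) : Prop := (σ = 1 ∧ e = 0) ∨ (σ = -1 ∧ e = 1)

/-- Truncated division plus `e` rounds in the direction prescribed by `σ`. -/
theorem Rnd.div {σ : ℝ} {e : ℕ} (h : Rnd σ e) (a j : ℕ) {x : ℝ} (hx : σ * a ≤ σ * x) :
    σ * ((a / 2 ^ j + e : ℕ) : ℝ) ≤ σ * (x / 2 ^ j) := by
  have hp : (0 : ℝ) < 2 ^ j := by positivity
  rcases h with ⟨rfl, rfl⟩ | ⟨rfl, rfl⟩
  · have : ((a / 2 ^ j : ℕ) : ℝ) ≤ a / 2 ^ j := by exact_mod_cast Nat.cast_div_le (α := ℝ)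
    have h2 : (a : ℝ) / 2 ^ j ≤ x / 2 ^ j := by gcongr; linarith
    simp only [add_zero]; linarith
  · have : (a : ℝ) / 2 ^ j ≤ ((a / 2 ^ j + 1 : ℕ) : ℝ) := by
      rw [div_le_iff₀ hp]
      have := Nat.lt_mul_div_succ a (show 0 < 2 ^ j by positivity)
      rw [mul_comm] at this
      exact_mod_cast this.le
    have h2 : x / 2 ^ j ≤ (a : ℝ) / 2 ^ j := by gcongr; linarith
    linarith

/-- If `f` is a sound estimate on clauses of size 3 and 2, then `force` is sound on clauses of
size 1, 2, 3 from which those meeting the excluded vertices have been dropped. -/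
theorem force_sound {σ : ℝ} {e : ℕ} (hσ : Rnd σ e) {U : Finset ℕ} {k : ℕ} (hk : 0 < k)
    {f : List ℕ → List ℕ → ℕ}
    (hf : ∀ C3 C2, WF U k 3 C3 → WF U k 2 C2 →
      σ * (f C3 C2 : ℝ) ≤ σ * (2 ^ 60 * pFree U (fam k C3 ∪ fam k C2)))
    {C3 C2 : List ℕ} (h3 : WF U k 3 C3) (h2 : WF U k 2 C2) :
    ∀ (Q : List ℕ) (F j : ℕ), WF U k 1 Q →
      σ * (force e f Q F C3 C2 j : ℝ) ≤ σ * (2 ^ 60 *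
        pFree U {c ∈ fam k Q ∪ (fam k C3 ∪ fam k C2) | Disjoint c (cl k F)} / 2 ^ j) := by
  intro Q
  induction Q with
  | nil =>
    intro F j _
    have : {c ∈ fam k [] ∪ (fam k C3 ∪ fam k C2) | Disjoint c (cl k F)} =
        fam k (avoid F C3) ∪ fam k (avoid F C2) := by
      rw [fam_avoid hk, fam_avoid hk, fam_nil, Set.empty_union]
      ext c; simp [or_and_right]
    rw [this, force]
    exact hσ.div _ _ (hf _ _ (h3.avoid F) (h2.avoid F))
  | cons q Q ih =>
    intro F j hQ
    have hQ' : WF U k 1 Q := fun m hm => hQ m (List.mem_cons_of_mem _ hm)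
    rw [force, fam_cons]
    cases hq : hit F q with
    | true =>
      rw [hit_iff hk] at hq
      rw [cond_true]
      convert ih F j hQ' using 6
      ext c
      simp only [Set.mem_union, Set.mem_singleton_iff]
      constructor
      · rintro ⟨(rfl | h) | h, hd⟩
        · exact absurd hd hq
        · exact ⟨Or.inl h, hd⟩
        · exact ⟨Or.inr h, hd⟩
      · rintro ⟨h | h, hd⟩
        · exact ⟨Or.inl (Or.inr h), hd⟩
        · exact ⟨Or.inr h, hd⟩
    | false =>
      have hq' : Disjoint (cl k q) (cl k F) := by
        by_contra h
        rw [← hit_iff hk, hq] at h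
        cases h
      obtain ⟨hqU, hq1⟩ := hQ q List.mem_cons_self
      obtain ⟨u, hu⟩ := Set.ncard_eq_one.1 hq1
      have huU : u ∈ U := by simpa [hu] using hqU
      rw [cond_false, pFree_forced huU (by rw [← hu]; exact ⟨by simp, hq'⟩)]
      convert ih (Nat.lor F q) (j + 1) hQ' using 2
      rw [pow_succ' (2 : ℝ) j]
      have : {c ∈ {c ∈ {cl k q} ∪ fam k Q ∪ (fam k C3 ∪ fam k C2) | Disjoint c (cl k F)} | u ∉ c} =
        {c ∈ fam k Q ∪ (fam k C3 ∪ fam k C2) | Disjoint c (cl k (Nat.lor F q))} := by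
        ext c
        simp only [Set.mem_ofPred_eq, Set.mem_union, Set.mem_singleton_iff, cl_lor, hu,
          Set.disjoint_union_right, Set.disjoint_singleton_right]
        constructor
        · rintro ⟨⟨(rfl | h) | h, hd⟩, hn⟩
          · simp at hn
          · exact ⟨Or.inl h, hd, hn⟩
          · exact ⟨Or.inr h, hd, hn⟩
        · rintro ⟨h | h, hd, hn⟩
          · exact ⟨⟨Or.inl (Or.inr h), hd⟩, hn⟩
          · exact ⟨⟨Or.inr h, hd⟩, hn⟩
      rw [this]
      field_simp

/-- If the leaf estimate is sound, then so is `tree`, in the same direction. -/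
theorem tree_sound {σ : ℝ} {e : ℕ} (hσ : Rnd σ e) {U : Finset ℕ} {k : ℕ} (hk : 0 < k)
    {leaf : List ℕ → List ℕ → ℕ}
    (hf : ∀ C3 C2, WF U k 3 C3 → WF U k 2 C2 →
      σ * (leaf C3 C2 : ℝ) ≤ σ * (2 ^ 60 * pFree U (fam k C3 ∪ fam k C2))) :
    ∀ vs : List ℕ, (∀ v ∈ vs, k * v ∈ U) → ∀ C3 C2, WF U k 3 C3 → WF U k 2 C2 →
      σ * (tree e leaf vs C3 C2 : ℝ) ≤ σ * (2 ^ 60 * pFree U (fam k C3 ∪ fam k C2)) := by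
  intro vs
  induction vs with
  | nil => intro _; exact hf
  | cons v vs ih =>
    intro hvs C3 C2 h3 h2
    have ih := ih fun v hv => hvs v (List.mem_cons_of_mem _ hv)
    rw [tree]
    cases (C3.any (hit (2 ^ v)) || C2.any (hit (2 ^ v)))
    · exact ih C3 C2 h3 h2
    · rw [cond_true]
      have e1 : {c ∈ fam k C3 ∪ fam k C2 | k * v ∉ c} =
          fam k (avoid (2 ^ v) C3) ∪ fam k (avoid (2 ^ v) C2) := by
        rw [fam_avoid hk, fam_avoid hk, cl_pow]
        ext c; simp [or_and_right]
      have e2 : (· \ {k * v}) '' (fam k C3 ∪ fam k C2) =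
          {c ∈ fam k (resid (2 ^ v) C2) ∪ (fam k (avoid (2 ^ v) C3) ∪
            fam k (resid (2 ^ v) C3 ++ avoid (2 ^ v) C2)) | Disjoint c (cl k 0)} := by
        rw [Set.image_union, ← fam_resid hk, ← fam_resid hk, cl_zero, fam_append]
        ext c; simp only [Set.mem_union, Set.mem_ofPred_eq, Set.disjoint_empty, and_true]; tauto
      have a1 := ih _ _ (h3.avoid (2 ^ v)) (h2.avoid (2 ^ v))
      have a2 := force_sound hσ hk ih (h3.avoid (2 ^ v))
        ((h3.resid hk v).append (h2.avoid (2 ^ v))) _ 0 0 (h2.resid hk v)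
      rw [← e1] at a1
      rw [← e2, pow_zero, div_one] at a2
      have := hσ.div (_ + _) 1 (x := 2 ^ 60 * pFree U {c ∈ fam k C3 ∪ fam k C2 | k * v ∉ c} +
        2 ^ 60 * pFree U ((· \ {k * v}) '' (fam k C3 ∪ fam k C2)))
        (by push_cast; rw [mul_add, mul_add]; exact add_le_add a1 a2)
      refine this.trans_eq ?_
      rw [pFree_branch (hvs v List.mem_cons_self) (fam k C3 ∪ fam k C2)]
      ring

theorem fam_harris {U : Finset ℕ} {k j : ℕ} : ∀ {C : List ℕ}, WF U k j C →
    (1 - (1 / 2 : ℝ) ^ j) ^ C.length ≤ pFree U (fam k C) := by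
  intro C
  induction C with
  | nil => intro _; simp [fam_nil, pFree_empty]
  | cons c C ih =>
    intro h
    have ih := ih fun m hm => h m (List.mem_cons_of_mem _ hm)
    obtain ⟨hU, hc⟩ := h c List.mem_cons_self
    have h0 : 0 ≤ 1 - (1 / 2 : ℝ) ^ j := by
      have : (1 / 2 : ℝ) ^ j ≤ 1 := pow_le_one₀ (by norm_num) (by norm_num)
      linarith
    rw [fam_cons, List.length_cons, pow_succ']
    refine le_trans ?_ (pFree_harris _ _ _)
    rw [pFree_single_ncard U hU, hc]
    exact mul_le_mul_of_nonneg_left ih h0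

theorem leaf_value (a b : ℕ) : ((7 ^ b * 3 ^ a * 2 ^ 60 : ℕ) : ℝ) / 2 ^ (3 * b + 2 * a) =
    2 ^ 60 * ((1 - (1 / 2 : ℝ) ^ 3) ^ b * (1 - (1 / 2 : ℝ) ^ 2) ^ a) := by
  have h1 : (1 - (1 / 2 : ℝ) ^ 3) = 7 / 2 ^ 3 := by norm_num
  have h2 : (1 - (1 / 2 : ℝ) ^ 2) = 3 / 2 ^ 2 := by norm_num
  rw [h1, h2, div_pow, div_pow, pow_add, pow_mul, pow_mul]
  simp only [Nat.cast_mul, Nat.cast_pow, Nat.cast_ofNat]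
  field_simp

theorem leafLow_sound {U : Finset ℕ} {k : ℕ} (C3 C2 : List ℕ) (h3 : WF U k 3 C3)
    (h2 : WF U k 2 C2) :
    (1 : ℝ) * (leafLow C3 C2 : ℝ) ≤ 1 * (2 ^ 60 * pFree U (fam k C3 ∪ fam k C2)) := by
  have hR : Rnd 1 0 := Or.inl ⟨rfl, rfl⟩
  refine (hR.div _ _ le_rfl).trans ?_
  rw [leaf_value, one_mul, one_mul]
  gcongr
  refine le_trans ?_ (pFree_harris _ _ _)
  exact mul_le_mul (fam_harris h3) (fam_harris h2) (by norm_num) (pFree_nonneg _ _)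

/-- A clause disjoint from everything used so far contributes an independent factor. -/
theorem pFree_add_clause {U : Finset ℕ} {k F c j : ℕ} (hk : 0 < k) {P : Set (Set ℕ)}
    (hP : ∀ p ∈ P, p ⊆ cl k F) (hF : cl k F ⊆ (U : Set ℕ)) (hh : hit F c = false)
    (hc : cl k c ⊆ (U : Set ℕ)) (hj : (cl k c).ncard = j) :
    pFree U (P ∪ {cl k c}) = pFree U P * (1 - (1 / 2 : ℝ) ^ j) := by
  classical
  obtain ⟨V, hV⟩ := (U.finite_toSet.subset hF).exists_finset_coe
  have hd : Disjoint (cl k c) (cl k F) := by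
    by_contra h
    rw [← hit_iff hk, hh] at h
    cases h
  rw [pFree_indep U V (by rw [← Finset.coe_subset, hV]; exact hF) _ _ (by rwa [hV])
    (by rw [hV]; rintro b rfl; exact hd), pFree_single_ncard U hc, hj]

theorem up3_sound {U : Finset ℕ} {k : ℕ} (hk : 0 < k) (a : ℕ) : ∀ (C3 : List ℕ) (F b : ℕ)
    (P : Set (Set ℕ)), WF U k 3 C3 → (∀ p ∈ P, p ⊆ cl k F) → cl k F ⊆ (U : Set ℕ) →
    pFree U P ≤ (1 - (1 / 2 : ℝ) ^ 3) ^ b * (1 - (1 / 2 : ℝ) ^ 2) ^ a →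
    2 ^ 60 * pFree U (P ∪ fam k C3) ≤ up3 C3 F a b := by
  intro C3
  induction C3 with
  | nil =>
    intro F b P _ _ _ h
    have hR : Rnd (-1) 1 := Or.inr ⟨rfl, rfl⟩
    have := hR.div (7 ^ b * 3 ^ a * 2 ^ 60) (3 * b + 2 * a) le_rfl
    rw [leaf_value] at this
    rw [fam_nil, Set.union_empty, up3]
    nlinarith
  | cons c C3 ih =>
    intro F b P h3 hP hF h
    have h3' : WF U k 3 C3 := fun m hm => h3 m (List.mem_cons_of_mem _ hm)
    obtain ⟨hU, hc⟩ := h3 c List.mem_cons_self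
    rw [fam_cons, up3, ← Set.union_assoc]
    cases hh : hit F c with
    | true =>
      refine le_trans ?_ (ih F b P h3' hP hF h)
      gcongr
      apply pFree_anti
      exact Set.union_subset_union_left _ Set.subset_union_left
    | false =>
      refine ih _ _ _ h3' ?_ ?_ ?_
      · rw [cl_lor]
        rintro p (hp | rfl)
        · exact (hP p hp).trans Set.subset_union_left
        · exact Set.subset_union_right
      · rw [cl_lor]; exact Set.union_subset hF hU
      · rw [pFree_add_clause hk hP hF hh hU hc]
        calc _ ≤ _ := mul_le_mul_of_nonneg_right h (by norm_num)
          _ = _ := by ring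

theorem up2_sound {U : Finset ℕ} {k : ℕ} (hk : 0 < k) (C3 : List ℕ) (h3 : WF U k 3 C3) (b : ℕ) :
    ∀ (C2 : List ℕ) (F a : ℕ)
    (P : Set (Set ℕ)), WF U k 2 C2 → (∀ p ∈ P, p ⊆ cl k F) → cl k F ⊆ (U : Set ℕ) →
    pFree U P ≤ (1 - (1 / 2 : ℝ) ^ 3) ^ b * (1 - (1 / 2 : ℝ) ^ 2) ^ a →
    2 ^ 60 * pFree U (P ∪ fam k C2 ∪ fam k C3) ≤ up2 C2 C3 F a b := by
  intro C2
  induction C2 with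
  | nil =>
    intro F a P _ hP hF h
    rw [fam_nil, Set.union_empty, up2]
    exact up3_sound hk a C3 F b P h3 hP hF h
  | cons c C2 ih =>
    intro F a P h2 hP hF h
    have h2' : WF U k 2 C2 := fun m hm => h2 m (List.mem_cons_of_mem _ hm)
    obtain ⟨hU, hc⟩ := h2 c List.mem_cons_self
    rw [fam_cons, up2, ← Set.union_assoc]
    cases hh : hit F c with
    | true =>
      refine le_trans ?_ (ih F a P h2' hP hF h)
      gcongr
      apply pFree_anti
      exact Set.union_subset_union_left _
        (Set.union_subset_union_left _ Set.subset_union_left)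
    | false =>
      refine ih _ _ _ h2' ?_ ?_ ?_
      · rw [cl_lor]
        rintro p (hp | rfl)
        · exact (hP p hp).trans Set.subset_union_left
        · exact Set.subset_union_right
      · rw [cl_lor]; exact Set.union_subset hF hU
      · rw [pFree_add_clause hk hP hF hh hU hc]
        calc _ ≤ _ := mul_le_mul_of_nonneg_right h (by norm_num)
          _ = _ := by ring

theorem leafUp_sound {U : Finset ℕ} {k : ℕ} (hk : 0 < k) (C3 C2 : List ℕ) (h3 : WF U k 3 C3)
    (h2 : WF U k 2 C2) :
    (-1 : ℝ) * (leafUp C3 C2 : ℝ) ≤ -1 * (2 ^ 60 * pFree U (fam k C3 ∪ fam k C2)) := by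
  have := up2_sound hk C3 h3 0 C2 0 0 ∅ h2 (by simp) (by simp [cl_zero]) (by simp [pFree_empty])
  rw [Set.empty_union, Set.union_comm] at this
  rw [leafUp]; linarith

/-! ### Progressions grouped by core -/

/-- The geometric progression `a, a r, a r²` as a set. -/
def edge (a r : ℕ) : Set ℕ := {a, a * r, a * r ^ 2}

/-- The geometric progressions contained in `{1, …, n}`. -/
def GP (n : ℕ) : Set (Set ℕ) :=
  {c | ∃ a r, 0 < a ∧ 2 ≤ r ∧ a * r ^ 2 ≤ n ∧ c = edge a r}

theorem edge_subset {a r N : ℕ} (ha : 0 < a) (hr : 2 ≤ r) (h : a * r ^ 2 ≤ N) :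
    edge a r ⊆ (Finset.Icc 1 N : Finset ℕ) := by
  have h1 : a ≤ a * r ^ 2 := Nat.le_mul_of_pos_right a (by positivity)
  have h2 : a * r ≤ a * r ^ 2 := Nat.mul_le_mul_left a (by nlinarith)
  have h3 : 0 < a * r := by positivity
  intro j hj
  simp only [edge, Set.mem_insert_iff, Set.mem_singleton_iff] at hj
  simp only [Finset.coe_Icc, Set.mem_Icc]
  rcases hj with rfl | rfl | rfl <;> omega

theorem H_eq (n : ℕ) : (H n : ℝ) = 2 ^ n * pFree (Finset.Icc 1 n) (GP n) := by
  classical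
  have : H n = cntFree (Finset.Icc 1 n) (GP n) := by
    unfold H cntFree
    rw [Nat.subtype_card]
    intro S
    simp only [Finset.mem_filter, Finset.mem_powerset, and_congr_right_iff]
    intro hS
    unfold GPFree
    constructor
    · rintro h ⟨a, r, ha, hr, h1, h2, h3⟩
      have h4 := hS h3
      rw [Finset.mem_Icc] at h4
      refine h (edge a r) ⟨a, r, ha, hr, h4.2, rfl⟩ ?_
      simp [edge, Set.insert_subset_iff, h1, h2, h3]
    · rintro h c ⟨a, r, ha, hr, -, rfl⟩ hc
      simp only [edge, Set.insert_subset_iff, Set.singleton_subset_iff, Finset.mem_coe] at hc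
      exact h ⟨a, r, ha, hr, hc⟩
  unfold pFree
  rw [this, Nat.card_Icc, Nat.add_sub_cancel]
  field_simp

/-- The ambient set of integers. It is larger than `{1, …, n}` so that it also contains the
terms of the slightly too long progressions that the tables use for a whole range of `n / k`. -/
def univ (n : ℕ) : Finset ℕ := Finset.Icc 1 (n * 1000)

theorem pFree_univ (n : ℕ) : pFree (univ n) (GP n) = pFree (Finset.Icc 1 n) (GP n) := by
  apply pFree_superset
  · exact Finset.Icc_subset_Icc_right (by omega)
  · rintro _ ⟨a, r, ha, hr, h, rfl⟩
    exact edge_subset ha hr h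

/-- The 3-smooth numbers, those with no prime factor above `3`. -/
def Sm (t : ℕ) : Prop := ∃ i j, t = 2 ^ i * 3 ^ j

theorem Sm.pos {t : ℕ} (h : Sm t) : 0 < t := by
  obtain ⟨i, j, rfl⟩ := h; positivity

theorem Sm.mul {s t : ℕ} (hs : Sm s) (ht : Sm t) : Sm (s * t) := by
  obtain ⟨i, j, rfl⟩ := hs
  obtain ⟨i', j', rfl⟩ := ht
  exact ⟨i + i', j + j', by ring⟩

theorem Sm.pow {s : ℕ} (hs : Sm s) (m : ℕ) : Sm (s ^ m) := by
  obtain ⟨i, j, rfl⟩ := hs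
  exact ⟨i * m, j * m, by ring⟩

theorem Sm.of_dvd {t : ℕ} (h : t ∣ 6 ^ 9) : Sm t := by
  rw [show 6 ^ 9 = 2 ^ 9 * 3 ^ 9 by norm_num, Nat.dvd_mul] at h
  obtain ⟨a, b, ha, hb, rfl⟩ := h
  obtain ⟨i, -, rfl⟩ := (Nat.dvd_prime_pow Nat.prime_two).1 ha
  obtain ⟨j, -, rfl⟩ := (Nat.dvd_prime_pow Nat.prime_three).1 hb
  exact ⟨i, j, rfl⟩

theorem Sm.dvd {t : ℕ} (h : Sm t) (ht : t < 512) : t ∣ 6 ^ 9 := by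
  obtain ⟨i, j, rfl⟩ := h
  have hi : i ≤ 9 := by
    by_contra hi
    have : 2 ^ 9 ≤ 2 ^ i := Nat.pow_le_pow_right (by norm_num) (by omega)
    have : 2 ^ i ≤ 2 ^ i * 3 ^ j := Nat.le_mul_of_pos_right _ (by positivity)
    omega
  have hj : j ≤ 9 := by
    by_contra hj
    have : 3 ^ 9 ≤ 3 ^ j := Nat.pow_le_pow_right (by norm_num) (by omega)
    have : 3 ^ j ≤ 2 ^ i * 3 ^ j := Nat.le_mul_of_pos_left _ (by positivity)
    omega
  rw [show 6 ^ 9 = 2 ^ 9 * 3 ^ 9 by norm_num]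
  exact Nat.mul_dvd_mul (Nat.pow_dvd_pow _ hi) (Nat.pow_dvd_pow _ hj)

/-- The largest divisor of `a` coprime to `6`, for `a > 0`: since `6 ^ a` has enough factors, the gcd
with it is the 3-smooth part of `a`. -/
def core (a : ℕ) : ℕ := a / a.gcd (6 ^ a)

theorem core_mul {k t : ℕ} (hk : k.Coprime 6) (ht : Sm t) : core (k * t) = k := by
  have hk0 : 0 < k := Nat.pos_of_ne_zero (by rintro rfl; norm_num at hk)
  have htd : t ∣ 6 ^ (k * t) := by
    obtain ⟨i, j, rfl⟩ := ht
    have h2 : i < 2 ^ i := Nat.lt_two_pow_self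
    have h3 : j < 3 ^ j := Nat.lt_pow_self (by norm_num)
    have h4 : 2 ^ i ≤ k * (2 ^ i * 3 ^ j) := by
      calc 2 ^ i = 1 * (2 ^ i * 1) := by ring
        _ ≤ _ := by gcongr; exacts [hk0, Nat.one_le_pow _ _ (by norm_num)]
    have h5 : 3 ^ j ≤ k * (2 ^ i * 3 ^ j) := by
      calc 3 ^ j = 1 * (1 * 3 ^ j) := by ring
        _ ≤ _ := by gcongr; exacts [hk0, Nat.one_le_pow _ _ (by norm_num)]
    rw [show (6 : ℕ) = 2 * 3 by norm_num, mul_pow]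
    exact Nat.mul_dvd_mul (Nat.pow_dvd_pow _ (by omega)) (Nat.pow_dvd_pow _ (by omega))
  unfold core
  rw [Nat.Coprime.gcd_mul_left_cancel t (hk.pow_right _), Nat.gcd_eq_left htd,
    Nat.mul_div_cancel _ ht.pos]

theorem core_spec {a : ℕ} (ha : 0 < a) : ∃ t, Sm t ∧ (core a).Coprime 6 ∧ a = core a * t := by
  obtain ⟨i, b, hb, rfl⟩ := Nat.exists_eq_pow_mul_and_not_dvd ha.ne' 2 (by norm_num)
  have hb0 : b ≠ 0 := by rintro rfl; simp at hb
  obtain ⟨j, c, hc, rfl⟩ := Nat.exists_eq_pow_mul_and_not_dvd hb0 3 (by norm_num)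
  have hc2 : ¬ 2 ∣ c := fun h => hb (h.mul_left _)
  have hcop : c.Coprime 6 := by
    rw [show 6 = 2 * 3 by norm_num]
    exact Nat.Coprime.mul_right ((Nat.prime_two.coprime_iff_not_dvd.2 hc2).symm)
      ((Nat.prime_three.coprime_iff_not_dvd.2 hc).symm)
  have hs : Sm (2 ^ i * 3 ^ j) := ⟨i, j, rfl⟩
  have e : 2 ^ i * (3 ^ j * c) = c * (2 ^ i * 3 ^ j) := by ring
  rw [e, core_mul hcop hs]
  exact ⟨_, hs, hcop, rfl⟩

/-- The possible cores up to `n`, that is the integers coprime to `6`. -/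
def cores (n : ℕ) : Finset ℕ := (Finset.Icc 1 n).filter (Nat.Coprime · 6)

theorem card_cores (m : ℕ) : (cores m).card = (m + 5) / 6 + (m + 1) / 6 := by
  induction m with
  | zero => simp [cores]
  | succ m ih =>
    have hm : (m + 1).Coprime 6 ↔ (m + 1) % 6 = 1 ∨ (m + 1) % 6 = 5 := by
      rw [Nat.coprime_iff_gcd_eq_one, Nat.gcd_comm, Nat.gcd_rec]
      have : (m + 1) % 6 < 6 := Nat.mod_lt _ (by norm_num)
      interval_cases (m + 1) % 6 <;> simp
    have hI : Finset.Icc 1 (m + 1) = insert (m + 1) (Finset.Icc 1 m) := by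
      ext j; simp; omega
    unfold cores at ih ⊢
    rw [hI, Finset.filter_insert]
    split_ifs with h
    · rw [Finset.card_insert_of_notMem (by simp), ih]
      rw [hm] at h; omega
    · rw [ih]; rw [hm] at h; omega

/-- Among `1, …, n`, about `n * (1 / x - 1 / y) / 3` integers `k` are coprime to `6` and satisfy
`x ≤ n / k < y`. -/
theorem count_cores {n x y : ℕ} (hx : 0 < x) (hy : 0 < y) :
    (n : ℝ) * ((1 / x - 1 / y) / 3) - 3 ≤
      (((cores n).filter fun k => x * k ≤ n ∧ n < y * k).card : ℝ) := by
  have hsub : cores (n / x) ⊆ ((cores n).filter fun k => x * k ≤ n ∧ n < y * k) ∪ cores (n / y) := by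
    intro k hk
    simp only [cores, Finset.mem_filter, Finset.mem_Icc, Finset.mem_union] at hk ⊢
    obtain ⟨⟨h1, h2⟩, h3⟩ := hk
    rw [Nat.le_div_iff_mul_le hx] at h2
    by_cases h : n < y * k
    · exact Or.inl ⟨⟨⟨h1, by nlinarith⟩, h3⟩, by linarith, h⟩
    · exact Or.inr ⟨⟨h1, (Nat.le_div_iff_mul_le hy).2 (by linarith)⟩, h3⟩
  have hc := (Finset.card_le_card hsub).trans (Finset.card_union_le _ _)
  rw [card_cores, card_cores] at hc
  set N := ((cores n).filter fun k => x * k ≤ n ∧ n < y * k).card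
  have h1 : n / x ≤ 3 * N + n / y + 5 := by omega
  have h2 : (n : ℝ) / x ≤ (n / x : ℕ) + 1 := by
    rw [div_le_iff₀ (by positivity)]
    have := Nat.lt_mul_div_succ n hx
    rw [mul_comm] at this
    exact_mod_cast this.le
  have h3 : ((n / y : ℕ) : ℝ) ≤ n / y := Nat.cast_div_le
  have h4 : ((n / x : ℕ) : ℝ) ≤ 3 * N + (n / y : ℕ) + 5 := by exact_mod_cast h1
  have h5 : (n : ℝ) * ((1 / x - 1 / y) / 3) = (n / x - n / y) / 3 := by ring
  rw [h5]; linarith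

/-- A row of a numerical table, concerning the cores `k` with `lo ≤ n / k < hi`. The branching order
is `vs`. In the upper bound for `H`, `-log₂` of the avoidance probability of the core is at least
`gain / 10000`. In the lower bound, it is at most `loss / 10000`, which improves on the default
estimate by at least `gain / 10000`; the field `loss` is not used in the upper bound. -/
structure Entry where
  lo : ℕ
  hi : ℕ
  gain : ℕ
  loss : ℕ
  vs : List ℕ

/-- The gain of the row of `L` whose range contains `n / k` (and `0` if there is none), provided
that the ranges are disjoint. -/
noncomputable def gains (n k : ℕ) (L : List Entry) : ℝ :=
  (L.map fun e => if e.lo * k ≤ n ∧ n < e.hi * k then (e.gain : ℝ) else 0).sum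

/-- The average gain per element of `{1, …, n}`, obtained by summing the gains over all cores. -/
noncomputable def rate (L : List Entry) : ℝ :=
  (L.map fun e => (e.gain : ℝ) * ((1 / e.lo - 1 / e.hi) / 3)).sum

theorem sum_gains (n : ℕ) : ∀ L : List Entry, (∀ e ∈ L, 0 < e.lo ∧ 0 < e.hi) →
    n * rate L - (L.map fun e => 3 * (e.gain : ℝ)).sum ≤ ∑ k ∈ cores n, gains n k L := by
  intro L
  induction L with
  | nil => intro _; simp [rate, gains]
  | cons e L ih =>
    intro h
    have ih := ih fun e he => h e (List.mem_cons_of_mem _ he)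
    obtain ⟨h1, h2⟩ := h e List.mem_cons_self
    have := mul_le_mul_of_nonneg_left (count_cores (n := n) h1 h2) (Nat.cast_nonneg e.gain : (0:ℝ) ≤ _)
    unfold rate gains at *
    simp only [List.map_cons, List.sum_cons, Finset.sum_add_distrib]
    rw [Finset.sum_ite, Finset.sum_const_zero, add_zero, Finset.sum_const, nsmul_eq_mul]
    linarith

theorem gains_le (n k : ℕ) {G : ℝ} (hG : 0 ≤ G) : ∀ L : List Entry,
    L.Pairwise (fun a b => a.hi ≤ b.lo) →
    (∀ e ∈ L, e.lo * k ≤ n → n < e.hi * k → (e.gain : ℝ) ≤ G) → gains n k L ≤ G := by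
  intro L
  induction L with
  | nil => intro _ _; simpa [gains] using hG
  | cons e L ih =>
    intro hp h
    rw [List.pairwise_cons] at hp
    have ih := ih hp.2 fun e he => h e (List.mem_cons_of_mem _ he)
    unfold gains at ih ⊢
    rw [List.map_cons, List.sum_cons]
    split_ifs with hc
    · have : (L.map fun e => if e.lo * k ≤ n ∧ n < e.hi * k then (e.gain : ℝ) else 0).sum = 0 := by
        apply List.sum_eq_zero
        intro z hz
        rw [List.mem_map] at hz
        obtain ⟨b, hb, rfl⟩ := hz
        have := Nat.mul_le_mul_right k (hp.1 b hb)
        rw [if_neg (by omega)]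
      rw [this, add_zero]
      exact h e List.mem_cons_self hc.1 hc.2
    · linarith

/-- The mask of the progression `t, t r, t r²`. -/
def mk (t r : ℕ) : ℕ := Nat.lor (Nat.lor (2 ^ t) (2 ^ (t * r))) (2 ^ (t * r * r))

theorem cl_mk (k t r : ℕ) : cl k (mk t r) = edge (k * t) r := by
  rw [mk, cl_lor, cl_lor, cl_pow, cl_pow, cl_pow, edge]
  ext j
  simp only [Set.mem_union, Set.mem_singleton_iff, Set.mem_insert_iff,
    show k * (t * r) = k * t * r by ring, show k * (t * r * r) = k * t * r ^ 2 by ring]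
  tauto

theorem ncard_edge {a r : ℕ} (ha : 0 < a) (hr : 2 ≤ r) : (edge a r).ncard = 3 := by
  have h1 : a < a * r := by nlinarith
  have h2 : a * r < a * r ^ 2 := by
    rw [pow_two, ← mul_assoc]; nlinarith
  unfold edge
  rw [Set.ncard_insert_of_notMem (by simp; omega), Set.ncard_pair (by omega)]

/-- The 3-smooth numbers below `x`, provided that `x ≤ 512`, listed as divisors of `6 ^ 9`. -/
def smo (x : ℕ) : List ℕ := (List.range x).filter (fun t => Nat.beq (6 ^ 9 % t) 0)

theorem mem_smo {x t : ℕ} : t ∈ smo x ↔ t < x ∧ t ∣ 6 ^ 9 := by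
  rw [smo, List.mem_filter, List.mem_range, Nat.beq_eq, Nat.dvd_iff_mod_eq_zero]

/-- Masks of the progressions with 3-smooth first term and last term below `y`, for `y ≤ 324`. -/
def edgesL (y : ℕ) : List ℕ := (smo y).flatMap fun t =>
  ((List.range 18).filter fun r => Nat.ble 2 r && Nat.blt (t * r * r) y).map (mk t)

/-- Masks of progressions with 3-smooth terms, all at most `x`. -/
def edgesU (x : ℕ) : List ℕ := (smo (x + 1)).flatMap fun t =>
  ((List.range (x + 1)).filter fun r => Nat.ble 2 r && (Nat.ble (t * r * r) x &&
    Nat.beq (6 ^ 9 % r) 0)).map (mk t)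

theorem mem_edgesL {y m : ℕ} : m ∈ edgesL y ↔
    ∃ t r, t < y ∧ t ∣ 6 ^ 9 ∧ 2 ≤ r ∧ r < 18 ∧ t * r * r < y ∧ m = mk t r := by
  simp only [edgesL, List.mem_flatMap, mem_smo, List.mem_map, List.mem_filter, List.mem_range,
    Bool.and_eq_true, Nat.ble_eq, Nat.blt_eq]
  constructor
  · rintro ⟨t, ⟨h1, h2⟩, r, ⟨h3, h4, h5⟩, rfl⟩; exact ⟨t, r, h1, h2, h4, h3, h5, rfl⟩
  · rintro ⟨t, r, h1, h2, h4, h3, h5, rfl⟩; exact ⟨t, ⟨h1, h2⟩, r, ⟨h3, h4, h5⟩, rfl⟩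

theorem mem_edgesU {x m : ℕ} (h : m ∈ edgesU x) :
    ∃ t r, t ∣ 6 ^ 9 ∧ 2 ≤ r ∧ t * r * r ≤ x ∧ r ∣ 6 ^ 9 ∧ m = mk t r := by
  simp only [edgesU, List.mem_flatMap, mem_smo, List.mem_map, List.mem_filter, List.mem_range,
    Bool.and_eq_true, Nat.ble_eq, Nat.beq_eq] at h
  obtain ⟨t, ⟨h1, h2⟩, r, ⟨h3, h4, h5, h6⟩, rfl⟩ := h
  exact ⟨t, r, h2, h4, h5, Nat.dvd_of_mod_eq_zero h6, rfl⟩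

/-! ### The lower bound -/

/-- The increments of `cum`. -/
def incs : List ℕ :=
  [1927, 1635, 1361, 1111, 894, 709, 556, 431, 332, 254, 194, 147, 111, 84, 63, 191]

/-- An upper bound for `-log₂ ((1 + (3 / 4) ^ m) / 2)`, in units of `1 / 10000`: the sum of the
first `min m 16` terms of `incs`. -/
def cum (m : ℕ) : ℕ := ((List.range 16).map fun j => cond (Nat.ble (j + 1) m) (incs.getD j 0) 0).sum

/-- The cost of the progressions with first term `a`: the bound `cum m` where `m` is the number of
ratios `r ≥ 2` with `a r² ≤ n`. It is written as a sum over `r = j + 2 ≤ 17` with conditions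
`a * r ^ 2 ≤ n`, which makes it easy to sum over `a`. -/
def wt (n a : ℕ) : ℕ :=
  ((List.range 16).map fun j => cond (Nat.ble (a * (j + 2) ^ 2) n) (incs.getD j 0) 0).sum

theorem wt_mono {x n k t : ℕ} (h : x * k ≤ n) : wt x t ≤ wt n (k * t) := by
  apply List.sum_le_sum
  intro j _
  rcases hx : Nat.ble (t * (j + 2) ^ 2) x with _ | _
  · simp
  · have hn : Nat.ble (k * t * (j + 2) ^ 2) n = true := by
      rw [Nat.ble_eq] at hx ⊢
      calc k * t * (j + 2) ^ 2 = t * (j + 2) ^ 2 * k := by ring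
        _ ≤ x * k := Nat.mul_le_mul_right _ hx
        _ ≤ n := h
    rw [hn]

theorem le_sqrt_iff {a n r : ℕ} (ha : 0 < a) : a * r ^ 2 ≤ n ↔ r ≤ Nat.sqrt (n / a) := by
  rw [Nat.le_sqrt', Nat.le_div_iff_mul_le ha, mul_comm]

theorem wt_eq {n a : ℕ} (ha : 0 < a) : wt n a = cum (Nat.sqrt (n / a) - 1) := by
  unfold wt cum
  congr 1
  apply List.map_congr_left
  intro j _
  congr 1
  rw [Bool.eq_iff_iff, Nat.ble_eq, Nat.ble_eq, le_sqrt_iff ha]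
  omega

theorem cum_small : ∀ m < 16, (2 * 4 ^ m) ^ 10000 ≤ (4 ^ m + 3 ^ m) ^ 10000 * 2 ^ cum m := by
  decide +kernel

/-- For `m ≥ 16` the bound is the trivial one: `a` itself is left out, at the cost of one bit. -/
theorem cum_large {m : ℕ} (hm : 16 ≤ m) : cum m = 10000 := by
  have : cum m = cum 16 := by
    unfold cum
    congr 1
    apply List.map_congr_left
    intro j hj
    rw [List.mem_range] at hj
    congr 1
    rw [Bool.eq_iff_iff, Nat.ble_eq, Nat.ble_eq]
    omega
  rw [this]; decide

theorem le_of_pow {p : ℝ} (hp : 0 ≤ p) {c : ℕ} (h : 1 ≤ p ^ 10000 * 2 ^ c) :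
    (2 : ℝ) ^ (-((c : ℝ) / 10000)) ≤ p := by
  refine le_of_pow_le_pow_left₀ (n := 10000) (by norm_num) hp ?_
  rw [← Real.rpow_natCast ((2 : ℝ) ^ _), ← Real.rpow_mul (by norm_num)]
  have : -((c : ℝ) / 10000) * ((10000 : ℕ) : ℝ) = -(c : ℝ) := by push_cast; field_simp
  rw [this, Real.rpow_neg (by norm_num), Real.rpow_natCast, inv_le_iff_one_le_mul₀ (by positivity)]
  exact h

theorem ge_of_pow {p : ℝ} {c : ℕ} (h : p ^ 10000 * 2 ^ c ≤ 1) :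
    p ≤ (2 : ℝ) ^ (-((c : ℝ) / 10000)) := by
  refine le_of_pow_le_pow_left₀ (n := 10000) (by norm_num) (by positivity) ?_
  rw [← Real.rpow_natCast ((2 : ℝ) ^ _), ← Real.rpow_mul (by norm_num)]
  have : -((c : ℝ) / 10000) * ((10000 : ℕ) : ℝ) = -(c : ℝ) := by push_cast; field_simp
  rw [this, Real.rpow_neg (by norm_num), Real.rpow_natCast, ← one_div, le_div_iff₀ (by positivity)]
  exact h

theorem cum_bound (m : ℕ) : (2 : ℝ) ^ (-((cum m : ℝ) / 10000)) ≤ (1 + (3 / 4 : ℝ) ^ m) / 2 := by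
  rcases lt_or_ge m 16 with hm | hm
  · apply le_of_pow (by positivity)
    have h := cum_small m hm
    have h' : ((2 * 4 ^ m : ℝ)) ^ 10000 ≤ (4 ^ m + 3 ^ m : ℝ) ^ 10000 * 2 ^ cum m := by
      exact_mod_cast h
    have e : (1 + (3 / 4 : ℝ) ^ m) / 2 = (4 ^ m + 3 ^ m) / (2 * 4 ^ m) := by
      rw [div_pow]; field_simp
    rw [e, div_pow, div_mul_eq_mul_div, le_div_iff₀ (by positivity), one_mul]
    exact h'
  · rw [cum_large hm]
    have : (2 : ℝ) ^ (-(((10000 : ℕ) : ℝ) / 10000)) = 1 / 2 := by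
      norm_num [Real.rpow_neg_one]
    rw [this]
    have : (0 : ℝ) ≤ (3 / 4) ^ m := by positivity
    linarith

/-- The progressions in `{1, …, n}` with first term `a`. -/
def starFam (n a : ℕ) : Set (Set ℕ) := {c | ∃ r, 2 ≤ r ∧ a * r ^ 2 ≤ n ∧ c = edge a r}

theorem mem_univ_of_le {n j : ℕ} (h0 : 0 < j) (h : j ≤ n) : j ∈ univ n := by
  rw [univ, Finset.mem_Icc]; omega

/-- If `a` is not chosen, its progressions are avoided; if it is, Harris's inequality gives a factor
`3 / 4` for each pair `{a r, a r²}`. -/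
theorem star_bound {n a : ℕ} (ha : 0 < a) (han : a ≤ n) :
    (2 : ℝ) ^ (-((wt n a : ℝ) / 10000)) ≤ pFree (univ n) (starFam n a) := by
  rw [wt_eq ha]
  refine (cum_bound _).trans ?_
  set s := Nat.sqrt (n / a) with hs
  rw [pFree_branch (mem_univ_of_le ha han)]
  have e1 : {c ∈ starFam n a | a ∉ c} = ∅ := by
    ext c
    simp only [Set.mem_ofPred_eq, Set.mem_empty_iff_false, iff_false, not_and, not_not]
    rintro ⟨r, -, -, rfl⟩
    simp [edge]
  have e2 : (· \ {a}) '' starFam n a =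
      ⋃ r ∈ Finset.Icc 2 s, ({({a * r, a * r ^ 2} : Set ℕ)} : Set (Set ℕ)) := by
    ext c
    simp only [starFam, Set.mem_image, Set.mem_iUnion, Finset.mem_Icc, Set.mem_singleton_iff,
      exists_prop]
    have key : ∀ r, 2 ≤ r → edge a r \ {a} = {a * r, a * r ^ 2} := by
      intro r hr
      have h1 : a < a * r := by nlinarith
      have h2 : a < a * r ^ 2 := by nlinarith
      unfold edge
      rw [Set.insert_sdiff_of_mem _ (by simp), Set.sdiff_singleton_eq_self]
      simp only [Set.mem_insert_iff, Set.mem_singleton_iff]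
      omega
    constructor
    · rintro ⟨_, ⟨r, hr, h, rfl⟩, rfl⟩
      exact ⟨r, ⟨hr, (le_sqrt_iff ha).1 h⟩, key r hr⟩
    · rintro ⟨r, ⟨hr, h⟩, rfl⟩
      exact ⟨_, ⟨r, hr, (le_sqrt_iff ha).2 h, rfl⟩, key r hr⟩
  have h3 : (3 / 4 : ℝ) ^ (s - 1) ≤ pFree (univ n) ((· \ {a}) '' starFam n a) := by
    rw [e2]
    refine le_trans ?_ (pFree_harris_biUnion _ _ _)
    rw [show s - 1 = (Finset.Icc 2 s).card by simp, ← Finset.prod_const]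
    apply Finset.prod_le_prod
    · intros; norm_num
    · intro r hr
      rw [Finset.mem_Icc] at hr
      have hle := (le_sqrt_iff ha).2 hr.2
      have har : 0 < a * r := Nat.mul_pos ha (by omega)
      have h2 : a * r < a * r ^ 2 := by
        rw [pow_two, ← mul_assoc]; nlinarith
      rw [pFree_single_ncard, Set.ncard_pair (by omega)]
      · norm_num
      · intro j hj
        simp only [Set.mem_insert_iff, Set.mem_singleton_iff] at hj
        apply mem_univ_of_le <;> omega
  rw [e1, pFree_empty]
  linarith

/-- The progressions in `{1, …, n}` whose first term has core `k`. The ratio is arbitrary. -/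
def cone (n k : ℕ) : Set (Set ℕ) :=
  {c | ∃ a r, 0 < a ∧ 2 ≤ r ∧ a * r ^ 2 ≤ n ∧ core a = k ∧ c = edge a r}

theorem GP_eq_cones (n : ℕ) : GP n = ⋃ k ∈ cores n, cone n k := by
  ext c
  simp only [Set.mem_iUnion, exists_prop]
  constructor
  · rintro ⟨a, r, ha, hr, h, rfl⟩
    obtain ⟨t, ht, hc, e⟩ := core_spec ha
    refine ⟨core a, ?_, a, r, ha, hr, h, rfl, rfl⟩
    have h1 : a ≤ a * r ^ 2 := Nat.le_mul_of_pos_right a (by positivity)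
    have h2 : core a ≤ a := Nat.div_le_self _ _
    have h3 : 0 < core a := Nat.pos_of_ne_zero (by intro h0; rw [h0] at e; omega)
    simp only [cores, Finset.mem_filter, Finset.mem_Icc]
    exact ⟨⟨h3, by omega⟩, hc⟩
  · rintro ⟨k, -, a, r, ha, hr, h, -, rfl⟩
    exact ⟨a, r, ha, hr, h, rfl⟩

/-- The total cost of the progressions whose first term has core `k`, according to the default
estimate. -/
noncomputable def starSum (n k : ℕ) : ℝ := ∑ a ∈ (Finset.Icc 1 n).filter (core · = k), (wt n a : ℝ)

theorem cone_default (n k : ℕ) :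
    (2 : ℝ) ^ (-(starSum n k / 10000)) ≤ pFree (univ n) (cone n k) := by
  have e : cone n k = ⋃ a ∈ (Finset.Icc 1 n).filter (core · = k), starFam n a := by
    ext c
    simp only [Set.mem_iUnion, exists_prop, Finset.mem_filter, Finset.mem_Icc]
    constructor
    · rintro ⟨a, r, ha, hr, h, hk, rfl⟩
      have h1 : a ≤ a * r ^ 2 := Nat.le_mul_of_pos_right a (by positivity)
      exact ⟨a, ⟨⟨ha, by omega⟩, hk⟩, r, hr, h, rfl⟩
    · rintro ⟨a, ⟨⟨ha, -⟩, hk⟩, r, hr, h, rfl⟩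
      exact ⟨a, r, ha, hr, h, hk, rfl⟩
  rw [e]
  refine le_trans ?_ (pFree_harris_biUnion _ _ _)
  have : -(starSum n k / 10000) =
      ∑ a ∈ (Finset.Icc 1 n).filter (core · = k), -((wt n a : ℝ) / 10000) := by
    rw [starSum, Finset.sum_neg_distrib, Finset.sum_div]
  rw [this, Real.rpow_sum_of_pos (by norm_num)]
  apply Finset.prod_le_prod
  · intros; positivity
  · intro a ha
    simp only [Finset.mem_filter, Finset.mem_Icc] at ha
    exact star_bound ha.1.1 ha.1.2

/-- The branching vertices, after dilation by some `k ≤ n`, lie in `univ n`. -/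
def okVs (e : Entry) : Bool := e.vs.all fun v => Nat.ble 1 v && Nat.ble v 1000

/-- Certifies that `A * 2 ^ (-60) ≥ 2 ^ (-c / 10000)`. -/
def checkLow (A c : ℕ) : Bool := Nat.ble ((2 ^ 60) ^ 10000) (A ^ 10000 * 2 ^ c)

theorem pow_low {B N A c : ℕ} (hB : 0 < B) (h : B ^ N ≤ A ^ N * 2 ^ c) {p : ℝ}
    (hp : (A : ℝ) ≤ B * p) : 1 ≤ p ^ N * 2 ^ c := by
  have c1 : (B : ℝ) ^ N ≤ (A : ℝ) ^ N * 2 ^ c := by exact_mod_cast h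
  have c2 : (A : ℝ) ^ N ≤ (B * p) ^ N := by gcongr
  have hB' : (0 : ℝ) < (B : ℝ) ^ N := pow_pos (Nat.cast_pos.2 hB) _
  rw [mul_pow] at c2
  have c3 : (B : ℝ) ^ N * 1 ≤ (B : ℝ) ^ N * (p ^ N * 2 ^ c) := by
    rw [mul_one, ← mul_assoc]
    exact c1.trans (mul_le_mul_of_nonneg_right c2 (by positivity))
  exact le_of_mul_le_mul_left c3 hB'

theorem checkLow_spec {A c : ℕ} (h : checkLow A c = true) {p : ℝ} (hp : (A : ℝ) ≤ 2 ^ 60 * p)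
    (hp0 : 0 ≤ p) : (2 : ℝ) ^ (-((c : ℝ) / 10000)) ≤ p := by
  apply le_of_pow hp0
  have h' := Nat.le_of_ble_eq_true h
  refine pow_low (B := 2 ^ 60) (N := 10000) (by positivity) h' ?_
  rw [Nat.cast_pow, Nat.cast_ofNat]
  exact hp

/-- The validity of a table row in the lower bound for `H`: the avoidance probability of the
progressions in `edgesL hi` is at least `2 ^ (-loss / 10000)`, and the default cost for
`n / k = lo` is at least `gain + loss`. Ratios are at most `17` because `hi ≤ 324 = 18²`. -/
def okL (e : Entry) : Bool :=
  Nat.ble 1 e.lo && (Nat.ble e.lo e.hi && (Nat.ble e.hi 324 && (okVs e &&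
    (Nat.ble (e.gain + e.loss) ((smo (e.lo + 1)).map (wt e.lo)).sum &&
      checkLow (tree 0 leafLow e.vs (edgesL e.hi) []) e.loss))))

/-- The default cost of a core is monotone in `n / k`. -/
theorem le_starSum {n k x : ℕ} (hk : k.Coprime 6) (h : x * k ≤ n) :
    ((((smo (x + 1)).map (wt x)).sum : ℕ) : ℝ) ≤ starSum n k := by
  classical
  have hk0 : 0 < k := Nat.pos_of_ne_zero (by rintro rfl; norm_num at hk)
  have hnd : (smo (x + 1)).Nodup := List.Nodup.filter _ List.nodup_range
  have hT : ∀ t ∈ (smo (x + 1)).toFinset, Sm t ∧ t ≤ x := by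
    intro t ht
    rw [List.mem_toFinset, mem_smo] at ht
    exact ⟨Sm.of_dvd ht.2, Nat.le_of_lt_succ ht.1⟩
  rw [← List.sum_toFinset _ hnd]
  generalize (smo (x + 1)).toFinset = T at hT
  have hinj : Set.InjOn (k * ·) (T : Set ℕ) :=
    fun a _ b _ h => Nat.eq_of_mul_eq_mul_left hk0 h
  have h1 : ∑ t ∈ T, wt x t ≤ ∑ a ∈ T.image (k * ·), wt n a := by
    rw [Finset.sum_image hinj]
    exact Finset.sum_le_sum fun t _ => wt_mono h
  have h2 : ∑ a ∈ T.image (k * ·), wt n a ≤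
      ∑ a ∈ (Finset.Icc 1 n).filter (core · = k), wt n a := by
    apply Finset.sum_le_sum_of_subset
    intro a ha
    rw [Finset.mem_image] at ha
    obtain ⟨t, ht, rfl⟩ := ha
    obtain ⟨hS, htx⟩ := hT t ht
    rw [Finset.mem_filter, Finset.mem_Icc]
    refine ⟨⟨Nat.mul_pos hk0 hS.pos, ?_⟩, core_mul hk hS⟩
    calc k * t ≤ k * x := Nat.mul_le_mul_left k htx
      _ = x * k := mul_comm _ _
      _ ≤ n := h
  rw [starSum, ← Nat.cast_sum]
  exact Nat.cast_le.2 (h1.trans h2)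

theorem wf_edges {n k y : ℕ} (hk : 0 < k) (hkn : k ≤ n) (hy : y ≤ 1000) {C : List ℕ}
    (h : ∀ m ∈ C, ∃ t r, 0 < t ∧ 2 ≤ r ∧ t * r * r ≤ y ∧ m = mk t r) : WF (univ n) k 3 C := by
  intro m hm
  obtain ⟨t, r, ht, hr, hle, rfl⟩ := h m hm
  rw [cl_mk]
  refine ⟨edge_subset (by positivity) hr ?_, ncard_edge (by positivity) hr⟩
  calc k * t * r ^ 2 = k * (t * r * r) := by ring
    _ ≤ n * 1000 := Nat.mul_le_mul hkn (hle.trans hy)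

theorem vs_mem {n k : ℕ} (hk : 0 < k) (hkn : k ≤ n) {e : Entry} (h : okVs e = true) :
    ∀ v ∈ e.vs, k * v ∈ univ n := by
  intro v hv
  simp only [okVs, List.all_eq_true, Bool.and_eq_true, Nat.ble_eq] at h
  obtain ⟨h1, h2⟩ := h v hv
  rw [univ, Finset.mem_Icc]
  exact ⟨Nat.mul_pos hk h1, Nat.mul_le_mul hkn h2⟩

theorem cone_entry {n k : ℕ} (hk : k ∈ cores n) {e : Entry} (he : okL e = true)
    (h1 : e.lo * k ≤ n) (h2 : n < e.hi * k) :
    (2 : ℝ) ^ (-((e.loss : ℝ) / 10000)) ≤ pFree (univ n) (cone n k) ∧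
      (e.gain + e.loss : ℝ) ≤ starSum n k := by
  simp only [okL, Bool.and_eq_true, Nat.ble_eq] at he
  obtain ⟨-, -, a3, a4, a5, a6⟩ := he
  simp only [cores, Finset.mem_filter, Finset.mem_Icc] at hk
  obtain ⟨⟨hk0, hkn⟩, hk6⟩ := hk
  refine ⟨?_, le_trans (by exact_mod_cast a5) (le_starSum hk6 h1)⟩
  have hwf : WF (univ n) k 3 (edgesL e.hi) := by
    refine wf_edges hk0 hkn (y := e.hi) (by omega) fun m hm => ?_
    obtain ⟨t, r, b1, b2, b3, b4, b5, rfl⟩ := mem_edgesL.1 hm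
    exact ⟨t, r, (Sm.of_dvd b2).pos, b3, b5.le, rfl⟩
  have key := tree_sound (Or.inl ⟨rfl, rfl⟩) hk0 leafLow_sound e.vs (vs_mem hk0 hkn a4)
    (edgesL e.hi) [] hwf (by simp [WF])
  rw [fam_nil, Set.union_empty, one_mul, one_mul] at key
  have hsub : cone n k ⊆ fam k (edgesL e.hi) := by
    rintro _ ⟨a, r, ha, hr, h, hc, rfl⟩
    obtain ⟨t, ht, -, e'⟩ := core_spec ha
    rw [hc] at e'
    subst e'
    have hlt : t * r * r < e.hi := by
      have : k * (t * r * r) < k * e.hi := by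
        calc k * (t * r * r) = k * t * r ^ 2 := by ring
          _ ≤ n := h
          _ < e.hi * k := h2
          _ = k * e.hi := mul_comm _ _
      exact Nat.lt_of_mul_lt_mul_left this
    have ht0 := ht.pos
    have htr : t ≤ t * r * r := by rw [mul_assoc]; exact Nat.le_mul_of_pos_right _ (by positivity)
    have hrr : r * r ≤ t * r * r := by rw [mul_assoc]; exact Nat.le_mul_of_pos_left _ ht0
    refine ⟨mk t r, mem_edgesL.2 ⟨t, r, by omega, ht.dvd (by omega), hr, ?_, hlt, rfl⟩,
      (cl_mk k t r).symm⟩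
    by_contra h18
    have : 18 * 18 ≤ r * r := Nat.mul_le_mul (by omega) (by omega)
    omega
  refine le_trans ?_ (pFree_anti _ hsub)
  exact checkLow_spec a6 key (pFree_nonneg _ _)

/-- The default estimate for one core, improved by the gain from the table. -/
theorem cone_bound {n k : ℕ} (hk : k ∈ cores n) {L : List Entry}
    (hL : ∀ e ∈ L, okL e = true) (hp : L.Pairwise fun a b => a.hi ≤ b.lo) :
    (2 : ℝ) ^ (-((starSum n k - gains n k L) / 10000)) ≤ pFree (univ n) (cone n k) := by
  set p := pFree (univ n) (cone n k)
  have h0 := cone_default n k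
  have hp0 : 0 < p := lt_of_lt_of_le (by positivity) h0
  have hlog : ∀ z : ℝ, (2 : ℝ) ^ z ≤ p ↔ z ≤ Real.logb 2 p := fun z =>
    (Real.le_logb_iff_rpow_le (by norm_num) hp0).symm
  rw [hlog] at h0 ⊢
  have := gains_le n k (G := starSum n k + 10000 * Real.logb 2 p) (by linarith) L hp
    (fun e he h1 h2 => by
      obtain ⟨b1, b2⟩ := cone_entry hk (hL e he) h1 h2
      rw [hlog] at b1
      linarith)
  linarith

/-- The cost per element of `{1, …, n}` of the default estimate. -/
noncomputable def starRate : ℝ := ∑ j ∈ Finset.range 16, (incs.getD j 0 : ℝ) / (j + 2) ^ 2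

theorem sum_wt (n : ℕ) : ∑ a ∈ Finset.Icc 1 n, (wt n a : ℝ) ≤ n * starRate := by
  have e : ∀ a, (wt n a : ℝ) = ∑ j ∈ Finset.range 16,
      if a * (j + 2) ^ 2 ≤ n then ((incs.getD j 0 : ℕ) : ℝ) else 0 := by
    intro a
    have : wt n a = ∑ j ∈ Finset.range 16, if a * (j + 2) ^ 2 ≤ n then incs.getD j 0 else 0 := by
      unfold wt
      rw [← List.toFinset_range 16, List.sum_toFinset _ List.nodup_range]
      congr 1
      apply List.map_congr_left
      intro j _
      simp only [Bool.cond_eq_ite, Nat.ble_eq]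
    rw [this]; push_cast; rfl
  simp_rw [e]
  rw [Finset.sum_comm, starRate, Finset.mul_sum]
  apply Finset.sum_le_sum
  intro j _
  rw [Finset.sum_ite, Finset.sum_const_zero, add_zero, Finset.sum_const, nsmul_eq_mul]
  have hc : ((Finset.Icc 1 n).filter fun a => a * (j + 2) ^ 2 ≤ n).card ≤ n / (j + 2) ^ 2 := by
    have : ((Finset.Icc 1 n).filter fun a => a * (j + 2) ^ 2 ≤ n) ⊆
        Finset.Icc 1 (n / (j + 2) ^ 2) := by
      intro a ha
      simp only [Finset.mem_filter, Finset.mem_Icc] at ha ⊢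
      exact ⟨ha.1.1, (Nat.le_div_iff_mul_le (by positivity)).2 ha.2⟩
    simpa using Finset.card_le_card this
  have hc' : (((Finset.Icc 1 n).filter fun a => a * (j + 2) ^ 2 ≤ n).card : ℝ) ≤
      n / (j + 2) ^ 2 := by
    refine le_trans (Nat.cast_le.2 hc) (Nat.cast_div_le.trans_eq ?_)
    push_cast; rfl
  calc _ ≤ (n : ℝ) / (j + 2) ^ 2 * _ := mul_le_mul_of_nonneg_right hc' (by positivity)
    _ = _ := by ring

theorem lower_main {L : List Entry} (hL : ∀ e ∈ L, okL e = true)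
    (hp : L.Pairwise fun a b => a.hi ≤ b.lo) (n : ℕ) :
    (2 : ℝ) ^ ((n : ℝ) - (n * (starRate - rate L) + (L.map fun e => 3 * (e.gain : ℝ)).sum) / 10000)
      ≤ H n := by
  have hpos : ∀ e ∈ L, 0 < e.lo ∧ 0 < e.hi := by
    intro e he
    have := hL e he
    simp only [okL, Bool.and_eq_true, Nat.ble_eq] at this
    exact ⟨this.1, le_trans this.1 this.2.1⟩
  have h1 := sum_gains n L hpos
  have h2 : ∑ k ∈ cores n, starSum n k ≤ n * starRate := by
    refine le_trans ?_ (sum_wt n)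
    unfold starSum
    simp_rw [Finset.sum_filter]
    rw [Finset.sum_comm]
    apply Finset.sum_le_sum
    intro a _
    rw [Finset.sum_ite_eq]
    split_ifs
    · exact le_rfl
    · positivity
  have h3 : (2 : ℝ) ^ (-((n * (starRate - rate L) +
      (L.map fun e => 3 * (e.gain : ℝ)).sum) / 10000)) ≤ pFree (univ n) (GP n) := by
    rw [GP_eq_cones]
    refine le_trans ?_ (pFree_harris_biUnion _ _ _)
    calc _ ≤ (2 : ℝ) ^ (∑ k ∈ cores n, -((starSum n k - gains n k L) / 10000)) := by
          apply Real.rpow_le_rpow_of_exponent_le (by norm_num)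
          rw [Finset.sum_neg_distrib, ← Finset.sum_div, Finset.sum_sub_distrib]
          linarith
      _ = ∏ k ∈ cores n, (2 : ℝ) ^ (-((starSum n k - gains n k L) / 10000)) :=
          Real.rpow_sum_of_pos (by norm_num) _ _
      _ ≤ _ := Finset.prod_le_prod (fun _ _ => by positivity) fun k hk => cone_bound hk hL hp
  rw [H_eq, ← pFree_univ, sub_eq_add_neg, Real.rpow_add (by norm_num), Real.rpow_natCast]
  gcongr

/-! ### The upper bound -/

/-- The progressions in `{1, …, n}` all of whose terms have core `k`. -/
def coneU (n k : ℕ) : Set (Set ℕ) :=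
  {c | ∃ t r, Sm t ∧ Sm r ∧ 2 ≤ r ∧ k * t * r ^ 2 ≤ n ∧ c = edge (k * t) r}

theorem pos_of_mem_cores {n k : ℕ} (hk : k ∈ cores n) : 0 < k ∧ k ≤ n ∧ k.Coprime 6 := by
  simp only [cores, Finset.mem_filter, Finset.mem_Icc] at hk
  omega

theorem coneU_subset {n k : ℕ} (hk : k ∈ cores n) : coneU n k ⊆ cone n k := by
  obtain ⟨h0, -, h6⟩ := pos_of_mem_cores hk
  rintro _ ⟨t, r, ht, -, hr, h, rfl⟩
  exact ⟨k * t, r, Nat.mul_pos h0 ht.pos, hr, h, core_mul h6 ht, rfl⟩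

/-- Progressions in `coneU n k` consist of integers of core `k`, so that different values of `k`
give disjoint supports. -/
theorem core_of_mem {n k : ℕ} (hk : k ∈ cores n) {c : Set ℕ} (hc : c ∈ coneU n k) :
    ∀ j ∈ c, j ∈ univ n ∧ core j = k := by
  obtain ⟨h0, -, h6⟩ := pos_of_mem_cores hk
  obtain ⟨t, r, ht, hr, h2, h, rfl⟩ := hc
  intro j hj
  constructor
  · have := edge_subset (Nat.mul_pos h0 ht.pos) h2 (h.trans (Nat.le_mul_of_pos_right n
      (by norm_num : 0 < 1000))) hj
    exact_mod_cast this
  · simp only [edge, Set.mem_insert_iff, Set.mem_singleton_iff] at hj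
    rcases hj with rfl | rfl | rfl
    · exact core_mul h6 ht
    · rw [mul_assoc]; exact core_mul h6 (ht.mul hr)
    · rw [mul_assoc]; exact core_mul h6 (ht.mul (hr.pow 2))

theorem pFree_coneU (n : ℕ) (s : Finset ℕ) (hs : s ⊆ cores n) :
    pFree (univ n) (⋃ k ∈ s, coneU n k) = ∏ k ∈ s, pFree (univ n) (coneU n k) := by
  induction s using Finset.induction_on with
  | empty => simp [pFree_empty]
  | insert k s hks ih =>
    rw [Finset.insert_subset_iff] at hs
    rw [Finset.set_biUnion_insert, Finset.prod_insert hks, ← ih hs.2]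
    apply pFree_indep (univ n) ((univ n).filter (core · = k)) (Finset.filter_subset _ _)
    · intro c hc j hj
      rw [Finset.mem_coe, Finset.mem_filter]
      exact core_of_mem hs.1 hc j hj
    · intro c hc
      simp only [Set.mem_iUnion] at hc
      obtain ⟨k', hk', hc⟩ := hc
      rw [Set.disjoint_left]
      intro j hj hj'
      rw [Finset.mem_coe, Finset.mem_filter] at hj'
      have := (core_of_mem (hs.2 hk') hc j hj).2
      exact hks (by rwa [← hj'.2, this])

/-- Certifies that `A * 2 ^ (-60) ≤ 2 ^ (-c / 10000)`. -/
def checkUp (A c : ℕ) : Bool := Nat.ble (A ^ 10000 * 2 ^ c) ((2 ^ 60) ^ 10000)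

theorem pow_up {B N A c : ℕ} (hB : 0 < B) (h : A ^ N * 2 ^ c ≤ B ^ N) {p : ℝ} (hp0 : 0 ≤ p)
    (hp : B * p ≤ (A : ℝ)) : p ^ N * 2 ^ c ≤ 1 := by
  have c1 : (A : ℝ) ^ N * 2 ^ c ≤ (B : ℝ) ^ N := by exact_mod_cast h
  have c2 : (B * p) ^ N ≤ (A : ℝ) ^ N := by gcongr
  have hB' : (0 : ℝ) < (B : ℝ) ^ N := pow_pos (Nat.cast_pos.2 hB) _
  rw [mul_pow] at c2
  have c3 : (B : ℝ) ^ N * (p ^ N * 2 ^ c) ≤ (B : ℝ) ^ N * 1 := by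
    rw [mul_one, ← mul_assoc]
    exact (mul_le_mul_of_nonneg_right c2 (by positivity)).trans c1
  exact le_of_mul_le_mul_left c3 hB'

theorem checkUp_spec {A c : ℕ} (h : checkUp A c = true) {p : ℝ} (hp : 2 ^ 60 * p ≤ (A : ℝ))
    (hp0 : 0 ≤ p) : p ≤ (2 : ℝ) ^ (-((c : ℝ) / 10000)) := by
  apply ge_of_pow
  have h' := Nat.le_of_ble_eq_true h
  refine pow_up (B := 2 ^ 60) (N := 10000) (by positivity) h' hp0 ?_
  rw [Nat.cast_pow, Nat.cast_ofNat]
  exact hp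

/-- The validity of a table row in the upper bound for `H`: the avoidance probability of the
progressions in `edgesU lo` is at most `2 ^ (-gain / 10000)`. -/
def okU (e : Entry) : Bool :=
  Nat.ble 1 e.lo && (Nat.ble e.lo e.hi && (Nat.ble e.lo 1000 && (okVs e &&
    checkUp (tree 1 leafUp e.vs (edgesU e.lo) []) e.gain)))

theorem coneU_entry {n k : ℕ} (hk : k ∈ cores n) {e : Entry} (he : okU e = true)
    (h1 : e.lo * k ≤ n) :
    pFree (univ n) (coneU n k) ≤ (2 : ℝ) ^ (-((e.gain : ℝ) / 10000)) := by
  simp only [okU, Bool.and_eq_true, Nat.ble_eq] at he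
  obtain ⟨-, -, a3, a4, a5⟩ := he
  obtain ⟨hk0, hkn, hk6⟩ := pos_of_mem_cores hk
  have hwf : WF (univ n) k 3 (edgesU e.lo) := by
    refine wf_edges hk0 hkn (y := e.lo) a3 fun m hm => ?_
    obtain ⟨t, r, b1, b2, b3, -, rfl⟩ := mem_edgesU hm
    exact ⟨t, r, (Sm.of_dvd b1).pos, b2, b3, rfl⟩
  have key := tree_sound (Or.inr ⟨rfl, rfl⟩) hk0 (leafUp_sound hk0) e.vs (vs_mem hk0 hkn a4)
    (edgesU e.lo) [] hwf (by simp [WF])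
  rw [fam_nil, Set.union_empty, neg_one_mul, neg_one_mul, neg_le_neg_iff] at key
  have hsub : fam k (edgesU e.lo) ⊆ coneU n k := by
    rintro _ ⟨m, hm, rfl⟩
    obtain ⟨t, r, b1, b2, b3, b4, rfl⟩ := mem_edgesU hm
    refine ⟨t, r, Sm.of_dvd b1, Sm.of_dvd b4, b2, ?_, cl_mk k t r⟩
    calc k * t * r ^ 2 = t * r * r * k := by ring
      _ ≤ e.lo * k := Nat.mul_le_mul_right k b3
      _ ≤ n := h1
  exact (pFree_anti _ hsub).trans (checkUp_spec a5 key (pFree_nonneg _ _))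

theorem pFree_le_one (U : Finset ℕ) (C : Set (Set ℕ)) : pFree U C ≤ 1 := by
  rw [← pFree_empty U]
  exact pFree_anti U (Set.empty_subset C)

theorem coneU_bound {n k : ℕ} (hk : k ∈ cores n) {L : List Entry}
    (hL : ∀ e ∈ L, okU e = true) (hp : L.Pairwise fun a b => a.hi ≤ b.lo) :
    pFree (univ n) (coneU n k) ≤ (2 : ℝ) ^ (-(gains n k L / 10000)) := by
  have hp0 : 0 < pFree (univ n) (coneU n k) :=
    lt_of_lt_of_le (by positivity) ((cone_default n k).trans (pFree_anti _ (coneU_subset hk)))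
  have hlog : ∀ z : ℝ, pFree (univ n) (coneU n k) ≤ (2 : ℝ) ^ z ↔
      Real.logb 2 (pFree (univ n) (coneU n k)) ≤ z := fun z =>
    (Real.logb_le_iff_le_rpow (by norm_num) hp0).symm
  have h1 : Real.logb 2 (pFree (univ n) (coneU n k)) ≤ 0 :=
    Real.logb_nonpos (by norm_num) hp0.le (pFree_le_one _ _)
  rw [hlog]
  have := gains_le n k (G := -(10000 * Real.logb 2 (pFree (univ n) (coneU n k)))) (by linarith)
    L hp (fun e he h1 _ => by
      have b1 := coneU_entry hk (hL e he) h1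
      rw [hlog] at b1
      linarith)
  linarith

theorem upper_main {L : List Entry} (hL : ∀ e ∈ L, okU e = true)
    (hp : L.Pairwise fun a b => a.hi ≤ b.lo) (n : ℕ) :
    (H n : ℝ) ≤
      (2 : ℝ) ^ ((n : ℝ) - (n * rate L - (L.map fun e => 3 * (e.gain : ℝ)).sum) / 10000) := by
  have hpos : ∀ e ∈ L, 0 < e.lo ∧ 0 < e.hi := by
    intro e he
    have := hL e he
    simp only [okU, Bool.and_eq_true, Nat.ble_eq] at this
    exact ⟨this.1, le_trans this.1 this.2.1⟩
  have h1 := sum_gains n L hpos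
  have hsub : (⋃ k ∈ cores n, coneU n k) ⊆ GP n := by
    rw [GP_eq_cones]
    exact Set.iUnion₂_mono fun k hk => coneU_subset hk
  have h3 : pFree (univ n) (GP n) ≤
      (2 : ℝ) ^ (-((n * rate L - (L.map fun e => 3 * (e.gain : ℝ)).sum) / 10000)) := by
    refine (pFree_anti _ hsub).trans ?_
    rw [pFree_coneU n _ subset_rfl]
    calc _ ≤ ∏ k ∈ cores n, (2 : ℝ) ^ (-(gains n k L / 10000)) :=
          Finset.prod_le_prod (fun _ _ => pFree_nonneg _ _) fun k hk => coneU_bound hk hL hp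
      _ = (2 : ℝ) ^ (∑ k ∈ cores n, -(gains n k L / 10000)) :=
          (Real.rpow_sum_of_pos (by norm_num) _ _).symm
      _ ≤ _ := by
          apply Real.rpow_le_rpow_of_exponent_le (by norm_num)
          rw [Finset.sum_neg_distrib, ← Finset.sum_div]
          linarith
  rw [H_eq, ← pFree_univ, sub_eq_add_neg, Real.rpow_add (by norm_num), Real.rpow_natCast]
  gcongr

/-! ### The tables -/

/-- The table for the lower bound. The branching vertices are those for which the tree brings
most; any choice would be valid. -/
def lowEntries : List Entry :=
  [⟨8, 9, 858, 2996, [2, 4]⟩,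
    ⟨9, 12, 724, 4765, [1, 2]⟩,
    ⟨12, 16, 991, 6425, [1, 2, 3]⟩,
    ⟨16, 18, 2602, 8102, [4, 1, 8, 3]⟩,
    ⟨18, 24, 2782, 9557, [4, 1, 8, 3, 6]⟩,
    ⟨24, 25, 3691, 10575, [4, 1, 8, 3, 6]⟩,
    ⟨25, 27, 3385, 11992, [1, 4, 8, 3, 6]⟩,
    ⟨27, 32, 3806, 13206, [1, 4, 8, 3, 6]⟩,
    ⟨32, 36, 5238, 15062, [1, 4, 8, 32, 3, 6]⟩,
    ⟨36, 48, 6486, 18270, [1, 4, 8, 36, 9, 32, 3, 6]⟩,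
    ⟨48, 49, 8106, 19938, [1, 4, 8, 36, 9, 32, 3, 12, 24]⟩,
    ⟨49, 50, 7696, 21057, [1, 4, 8, 36, 9, 32, 3, 12, 24]⟩,
    ⟨50, 54, 7407, 22457, [1, 4, 8, 36, 9, 32, 3, 12, 24, 5, 7, 2]⟩,
    ⟨54, 64, 8068, 23431, [1, 4, 8, 36, 9, 32, 3, 12, 24, 5, 7, 2, 6]⟩,
    ⟨64, 72, 9427, 25916, [1, 4, 8, 16, 36, 9, 32, 3, 12, 24, 5, 7, 2, 6]⟩,
    ⟨72, 75, 11209, 28590, [1, 4, 8, 36, 18, 2, 16, 12, 3, 24]⟩,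
    ⟨75, 81, 10932, 29978, [1, 4, 8, 36, 18, 2, 16, 3, 12, 24]⟩,
    ⟨81, 96, 11454, 31522, [1, 4, 8, 9, 36, 16, 72, 2, 27, 6, 12, 48]⟩,
    ⟨96, 100, 10132, 36132, [1, 4, 8, 9, 36, 16, 72, 2, 6, 3]⟩,
    ⟨100, 108, 11320, 37096, [1, 4, 8, 9, 36, 16, 72, 2, 6, 3, 24]⟩,
    ⟨108, 128, 12673, 40199, [1, 4, 8, 9, 36, 12, 3, 24, 2, 18, 16, 6]⟩,
    ⟨128, 144, 11281, 45689, [1, 4, 8, 32, 64, 9, 36, 12, 3, 24]⟩,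
    ⟨144, 162, 11920, 51061, [1, 4, 8, 12, 24, 3, 32, 36, 9, 64, 72]⟩,
    ⟨162, 192, 14451, 52416, [1, 4, 8, 12, 24, 3, 32, 36, 9, 18, 2]⟩,
    ⟨192, 216, 9274, 61584, [1, 4, 8, 12, 24, 3, 2, 18, 36]⟩,
    ⟨216, 242, 10542, 67035, [1, 4, 8, 12, 24, 3, 2, 18, 36]⟩]

/-- The table for the upper bound. The last range ends at an arbitrary large number, chosen finite so
that every row has the same form. -/
def upEntries : List Entry :=
  [⟨4, 8, 1926, 0, [1]⟩,
    ⟨8, 9, 2995, 0, [2, 4]⟩,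
    ⟨9, 12, 4764, 0, [1]⟩,
    ⟨12, 16, 6424, 0, [1, 2, 3]⟩,
    ⟨16, 18, 8101, 0, [4, 1, 8, 3]⟩,
    ⟨18, 24, 9556, 0, [4, 1, 8, 3, 6]⟩,
    ⟨24, 27, 10574, 0, [4, 1, 8, 3, 6]⟩,
    ⟨27, 32, 11671, 0, [4, 1, 8, 3, 6]⟩,
    ⟨32, 36, 13561, 0, [2, 4, 8, 16, 6, 12, 3, 9]⟩,
    ⟨36, 48, 16882, 0, [4, 1, 8, 36, 9, 32, 3, 6]⟩,
    ⟨48, 54, 18569, 0, [4, 1, 8, 36, 9, 32, 3, 12, 24]⟩,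
    ⟨54, 64, 19437, 0, [4, 1, 8, 36, 9, 32, 3, 12, 24, 6, 18]⟩,
    ⟨64, 72, 22229, 0, [4, 16, 2, 32, 6, 12, 48, 1, 9, 18]⟩,
    ⟨72, 81, 24992, 0, [4, 16, 2, 12, 6, 32, 48, 1, 9, 18, 8, 72]⟩,
    ⟨81, 108, 26543, 0, [1, 4, 8, 9, 36, 16, 72, 2, 27, 6, 12, 48]⟩,
    ⟨108, 162, 31348, 0, [12, 6, 36, 18, 3, 9, 24, 8, 2, 1, 16, 64, 27]⟩,
    ⟨162, 324, 38449, 0, [12, 36, 6, 18, 144, 24, 2, 8, 16, 1, 3, 9]⟩,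
    ⟨324, 100000, 50000, 0, [36, 4, 1, 9, 8, 32, 72, 12, 24, 288, 3, 16]⟩]

/-! ### Growth rates -/

set_option maxRecDepth 100000 in
theorem lowEntries_ok : lowEntries.all okL = true := by decide +kernel

set_option maxRecDepth 100000 in
theorem upEntries_ok : upEntries.all okU = true := by decide +kernel

theorem lowEntries_sorted : lowEntries.Pairwise fun a b => a.hi ≤ b.lo := by
  unfold lowEntries; decide +kernel

theorem upEntries_sorted : upEntries.Pairwise fun a b => a.hi ≤ b.lo := by
  unfold upEntries; decide +kernel

theorem low_rate : starRate - rate lowEntries ≤ 728.5 := by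
  unfold starRate rate lowEntries
  simp only [Finset.sum_range_succ, Finset.sum_range_zero, incs, List.getD_cons_zero,
    List.getD_cons_succ, List.map_cons, List.map_nil, List.sum_cons, List.sum_nil]
  norm_num

theorem up_rate : 548.5 ≤ rate upEntries := by
  unfold rate upEntries
  simp only [List.map_cons, List.map_nil, List.sum_cons, List.sum_nil]
  norm_num

theorem rpow_div_pow {c N : ℕ} (hN : 0 < N) : ((2 : ℝ) ^ ((c : ℝ) / N)) ^ N = 2 ^ c := by
  rw [← Real.rpow_natCast, ← Real.rpow_mul (by norm_num), div_mul_cancel₀ _ (by positivity),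
    Real.rpow_natCast]

theorem div_lt_rpow {a b c N : ℕ} (hb : 0 < b) (hN : 0 < N) (h : a ^ N < 2 ^ c * b ^ N) :
    (a / b : ℝ) < 2 ^ ((c : ℝ) / N) := by
  refine lt_of_pow_lt_pow_left₀ N (by positivity) ?_
  rw [rpow_div_pow hN, div_pow, div_lt_iff₀ (by positivity)]
  exact_mod_cast h

theorem rpow_lt_div {a b c N : ℕ} (hb : 0 < b) (hN : 0 < N) (h : 2 ^ c * b ^ N < a ^ N) :
    (2 : ℝ) ^ ((c : ℝ) / N) < (a / b : ℝ) := by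
  refine lt_of_pow_lt_pow_left₀ N (by positivity) ?_
  rw [rpow_div_pow hN, div_pow, lt_div_iff₀ (by positivity)]
  exact_mod_cast h

/-- Equivalent to `1901448 ^ 10000 < 2 ^ 9271 * 1000000 ^ 10000`. -/
theorem low_const : (1.901448 : ℝ) < 2 ^ (0.9271 : ℝ) := by
  have h := div_lt_rpow (a := 1901448) (b := 1000000) (c := 9271) (N := 10000) (by norm_num)
    (by norm_num) (by decide +kernel)
  convert h using 2 <;> norm_num

theorem up_const : (2 : ℝ) ^ (0.9452 : ℝ) < 1.925556 := by
  have h := rpow_lt_div (a := 1925556) (b := 1000000) (c := 9452) (N := 10000) (by norm_num)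
    (by norm_num) (by decide +kernel)
  convert h using 2 <;> norm_num

theorem eventually_low : ∀ᶠ n : ℕ in Filter.atTop,
    (2 : ℝ) ^ (0.9271 : ℝ) ≤ (H n : ℝ) ^ ((n : ℝ)⁻¹) := by
  set B := (lowEntries.map fun e => 3 * (e.gain : ℝ)).sum with hB
  filter_upwards [Filter.eventually_gt_atTop 0,
    (tendsto_natCast_atTop_atTop (R := ℝ)).eventually_ge_atTop (2 * B)] with n hn hnB
  have hn' : (0 : ℝ) < n := Nat.cast_pos.2 hn
  rw [Real.le_rpow_inv_iff_of_pos (by positivity) (by positivity) hn',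
    ← Real.rpow_mul (by norm_num)]
  refine le_trans ?_ (lower_main (List.all_eq_true.1 lowEntries_ok) lowEntries_sorted n)
  apply Real.rpow_le_rpow_of_exponent_le (by norm_num)
  have := mul_le_mul_of_nonneg_left low_rate hn'.le
  rw [← hB]
  linarith

theorem eventually_up : ∀ᶠ n : ℕ in Filter.atTop,
    (H n : ℝ) ^ ((n : ℝ)⁻¹) ≤ (2 : ℝ) ^ (0.9452 : ℝ) := by
  set B := (upEntries.map fun e => 3 * (e.gain : ℝ)).sum with hB
  filter_upwards [Filter.eventually_gt_atTop 0,
    (tendsto_natCast_atTop_atTop (R := ℝ)).eventually_ge_atTop (2 * B)] with n hn hnB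
  have hn' : (0 : ℝ) < n := Nat.cast_pos.2 hn
  rw [Real.rpow_inv_le_iff_of_pos (by positivity) (by positivity) hn',
    ← Real.rpow_mul (by norm_num)]
  refine (upper_main (List.all_eq_true.1 upEntries_ok) upEntries_sorted n).trans ?_
  apply Real.rpow_le_rpow_of_exponent_le (by norm_num)
  have := mul_le_mul_of_nonneg_left up_rate hn'.le
  rw [← hB]
  linarith

theorem gp_free_count_bounds :
    1.901448 < Filter.liminf (fun n : ℕ => (H n : ℝ) ^ ((n : ℝ)⁻¹)) Filter.atTop ∧
    Filter.limsup (fun n : ℕ => (H n : ℝ) ^ ((n : ℝ)⁻¹)) Filter.atTop < 1.925556 := by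
  have hbdd : Filter.IsBoundedUnder (· ≤ ·) Filter.atTop fun n : ℕ => (H n : ℝ) ^ ((n : ℝ)⁻¹) :=
    Filter.isBoundedUnder_of_eventually_le eventually_up
  have hbdd' : Filter.IsBoundedUnder (· ≥ ·) Filter.atTop fun n : ℕ => (H n : ℝ) ^ ((n : ℝ)⁻¹) :=
    Filter.isBoundedUnder_of_eventually_ge eventually_low
  exact ⟨low_const.trans_le (Filter.le_liminf_of_le hbdd.isCoboundedUnder_ge eventually_low),
    (Filter.limsup_le_of_le hbdd'.isCoboundedUnder_le eventually_up).trans_lt up_const⟩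
end

section
/- For every ε > 0 and δ > 0 there exist constants u₀ and K > 0 such that the following holds: for all reals X > y > 2 with u := (log X)/(log y) ≥ u₀, and every interval I of real numbers of length X, the number of integers in I having no prime divisor at most y differs from X·∏_{p ≤ y, p prime}(1 − 1/p) by at most K·X·(log y)·exp(−(1−δ)·u·log u) + K·X^ε. -/
/-!
Fix `σ ∈ [0, 1]` and `y ≥ 1`. Adding a prime `p` to the sifting set changes both the sifted count
and its expected value by Legendre's recursion, so the error `E(X)`, taken uniformly over all
intervals of length `X ≥ 1`, satisfies `E_{P ∪ {p}}(X) ≤ E_P(X) + E_P(X / p)`. The function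
`2 X ^ σ y ^ (1 - σ) ∏ (1 + p ^ (-σ))` satisfies this with equality. For `X ≤ y` it is at least the
trivial bound `X + 1`, and for `X ≥ y` the length `X / p` is still at least `1`, so it dominates
`E(X)` by induction over the set of primes (`sieve_bound`). No parity-dependent truncation is
needed, as the claimed error is the one of Rankin's bound for smooth numbers.

It remains to choose `σ = 1 - η`. Chebyshev's bound and `ζ (1 + 1 / log y) ≤ 1 + log y` give
`∏_{p ≤ y} (1 + p ^ (η - 1)) ≤ (1 + log y) exp (6 y ^ η)` (`prod_rankin`).
With `y ^ η = u` the total is `≪ X log y exp (-(u - 1) log u + 6 u)`, which for large `u`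
is at most the first error term. If this `η` exceeds `1 - ε / 2`, taking `η = 1 - ε / 2` instead gives `y ^ η ≤ u`, and
everything is absorbed by `X ^ ε`.
-/

/-! ### Legendre's recursion and the sieve bound -/

/-- The set of integers in `(a, a + X]` divisible by no element of `s`. -/
def siftedSet (s : Finset ℕ) (a X : ℝ) : Set ℤ :=
  {z : ℤ | a < (z : ℝ) ∧ (z : ℝ) ≤ a + X ∧ ∀ p ∈ s, ¬ ((p : ℤ) ∣ z)}

lemma siftedSet_subset (s : Finset ℕ) (a X : ℝ) :
    siftedSet s a X ⊆ (Finset.Ioc ⌊a⌋ ⌊a + X⌋ : Finset ℤ) := by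
  rintro z ⟨h1, h2, -⟩
  simp only [Finset.coe_Ioc, Set.mem_Ioc]
  exact ⟨Int.floor_lt.2 h1, Int.le_floor.2 h2⟩

lemma siftedSet_finite (s : Finset ℕ) (a X : ℝ) : (siftedSet s a X).Finite :=
  (Finset.finite_toSet _).subset (siftedSet_subset s a X)

lemma card_Ioc_floor {a X : ℝ} (hX : 0 ≤ X) :
    ((Finset.Ioc ⌊a⌋ ⌊a + X⌋).card : ℝ) = ⌊a + X⌋ - ⌊a⌋ := by
  have h : ⌊a⌋ ≤ ⌊a + X⌋ := Int.floor_mono (by linarith)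
  rw [Int.card_Ioc]
  have := Int.toNat_of_nonneg (sub_nonneg.2 h)
  exact_mod_cast this

lemma siftedSet_ncard_le (s : Finset ℕ) {a X : ℝ} (hX : 0 ≤ X) :
    ((siftedSet s a X).ncard : ℝ) ≤ X + 1 := by
  have h1 := Set.ncard_le_ncard (siftedSet_subset s a X) (Finset.finite_toSet _)
  rw [Set.ncard_coe_finset] at h1
  have h2 : ((siftedSet s a X).ncard : ℝ) ≤ (Finset.Ioc ⌊a⌋ ⌊a + X⌋).card := by exact_mod_cast h1
  rw [card_Ioc_floor hX] at h2
  have := Int.floor_le (a + X)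
  have := Int.lt_floor_add_one a
  linarith

lemma siftedSet_empty {a X : ℝ} (hX : 0 ≤ X) :
    |((siftedSet ∅ a X).ncard : ℝ) - X| ≤ 1 := by
  have h : siftedSet ∅ a X = (Finset.Ioc ⌊a⌋ ⌊a + X⌋ : Finset ℤ) := by
    ext z
    simp [siftedSet, Int.floor_lt, Int.le_floor]
  rw [h, Set.ncard_coe_finset, card_Ioc_floor hX, abs_le]
  have := Int.floor_le (a + X)
  have := Int.lt_floor_add_one a
  have := Int.floor_le a
  have := Int.lt_floor_add_one (a + X)
  constructor <;> linarith

/-- Legendre's recursion: the elements removed by the prime `p` are the multiples of `p`, and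
division by `p` maps these to the sifted set of the interval scaled by `1 / p`. -/
lemma siftedSet_insert {s : Finset ℕ} {p : ℕ} (hp : p.Prime) (hs : ∀ q ∈ s, q.Prime)
    (hps : p ∉ s) (a X : ℝ) :
    ((siftedSet (insert p s) a X).ncard : ℝ) =
      (siftedSet s a X).ncard - (siftedSet s (a / p) (X / p)).ncard := by
  have hp0 : (0 : ℝ) < p := by exact_mod_cast hp.pos
  have hpz : (p : ℤ) ≠ 0 := by exact_mod_cast hp.ne_zero
  have hu : siftedSet s a X =
      siftedSet (insert p s) a X ∪ (fun w : ℤ => (p : ℤ) * w) '' siftedSet s (a / p) (X / p) := by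
    ext z
    simp only [siftedSet, Set.mem_ofPred_eq, Set.mem_union, Set.mem_image, Finset.mem_insert,
      forall_eq_or_imp]
    constructor
    · rintro ⟨h1, h2, h3⟩
      by_cases hd : (p : ℤ) ∣ z
      · right
        obtain ⟨w, rfl⟩ := hd
        push_cast at h1 h2
        refine ⟨w, ⟨?_, ?_, fun q hq hqw => h3 q hq (hqw.mul_left _)⟩, rfl⟩
        · rw [div_lt_iff₀ hp0]; linarith
        · rw [← add_div, le_div_iff₀ hp0]; linarith
      · exact Or.inl ⟨h1, h2, hd, h3⟩
    · rintro (⟨h1, h2, -, h3⟩ | ⟨w, ⟨h1, h2, h3⟩, rfl⟩)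
      · exact ⟨h1, h2, h3⟩
      · rw [div_lt_iff₀ hp0] at h1
        rw [← add_div, le_div_iff₀ hp0] at h2
        push_cast
        refine ⟨by linarith, by linarith, fun q hq hd => ?_⟩
        rcases (Nat.prime_iff_prime_int.1 (hs q hq)).dvd_or_dvd hd with h | h
        · have : q = p := (Nat.prime_dvd_prime_iff_eq (hs q hq) hp).1 (by exact_mod_cast h)
          exact hps (this ▸ hq)
        · exact h3 q hq h
  have hdisj : Disjoint (siftedSet (insert p s) a X)
      ((fun w : ℤ => (p : ℤ) * w) '' siftedSet s (a / p) (X / p)) := by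
    rw [Set.disjoint_left]
    rintro z ⟨-, -, h⟩ ⟨w, -, rfl⟩
    exact h p (Finset.mem_insert_self _ _) (dvd_mul_right _ _)
  have hinj : Function.Injective (fun w : ℤ => (p : ℤ) * w) := mul_right_injective₀ hpz
  have := Set.ncard_union_eq hdisj (siftedSet_finite _ _ _) ((siftedSet_finite _ _ _).image _)
  rw [← hu, Set.ncard_image_of_injective _ hinj] at this
  rw [this]; push_cast; ring

/-- The sieve bound. On the range `X ≤ Y` it is trivial, and above that range both sides satisfy
the same recursion when a prime is added: replacing `X` by `X / p` multiplies `X ^ σ` by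
`p ^ (-σ)`. -/
lemma sieve_bound {σ Y : ℝ} (h0 : 0 ≤ σ) (h1 : σ ≤ 1) (s : Finset ℕ) :
    (∀ p ∈ s, p.Prime ∧ (p : ℝ) ≤ Y) → ∀ X a : ℝ, 1 ≤ X → 1 ≤ Y →
    |((siftedSet s a X).ncard : ℝ) - X * ∏ p ∈ s, (1 - 1 / (p : ℝ))| ≤
      2 * (X ^ σ * Y ^ (1 - σ)) * ∏ p ∈ s, (1 + (p : ℝ) ^ (-σ)) := by
  induction s using Finset.induction_on with
  | empty =>
    intro _ X a hX hY
    have := siftedSet_empty (a := a) (X := X) (by linarith)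
    have h3 : 1 ≤ X ^ σ := Real.one_le_rpow hX h0
    have h4 : 1 ≤ Y ^ (1 - σ) := Real.one_le_rpow hY (by linarith)
    simp only [Finset.prod_empty, mul_one]
    nlinarith
  | insert p s hps ih =>
    intro hs X a hX hY
    have hp := hs p (Finset.mem_insert_self _ _)
    have hs' : ∀ q ∈ s, q.Prime ∧ (q : ℝ) ≤ Y := fun q hq => hs q (Finset.mem_insert_of_mem hq)
    have hp0 : (0 : ℝ) < p := by exact_mod_cast hp.1.pos
    have h3 : 1 ≤ X ^ σ := Real.one_le_rpow hX h0
    have h4 : 1 ≤ Y ^ (1 - σ) := Real.one_le_rpow hY (by linarith)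
    rcases le_total X Y with hXY | hXY
    · have hX1 : X ≤ X ^ σ * Y ^ (1 - σ) := by
        calc X = X ^ σ * X ^ (1 - σ) := by
              rw [← Real.rpow_add (by linarith)]; simp
          _ ≤ X ^ σ * Y ^ (1 - σ) := by gcongr
      have hW0 : 0 ≤ ∏ p ∈ insert p s, (1 - 1 / (p : ℝ)) := by
        refine Finset.prod_nonneg fun q hq => ?_
        have : (1 : ℝ) ≤ q := by exact_mod_cast (hs q hq).1.one_le
        rw [sub_nonneg]; exact (div_le_one (by linarith)).2 this
      have hW1 : ∏ p ∈ insert p s, (1 - 1 / (p : ℝ)) ≤ 1 := by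
        refine Finset.prod_le_one (fun q hq => ?_) (fun q hq => ?_)
        · have : (1 : ℝ) ≤ q := by exact_mod_cast (hs q hq).1.one_le
          rw [sub_nonneg]; exact (div_le_one (by linarith)).2 this
        · have : (0 : ℝ) ≤ 1 / q := by positivity
          linarith
      have hR : 1 ≤ ∏ p ∈ insert p s, (1 + (p : ℝ) ^ (-σ)) := by
        refine Finset.one_le_prod fun q _ => ?_
        have : (0 : ℝ) ≤ (q : ℝ) ^ (-σ) := by positivity
        show (1 : ℝ) ≤ 1 + (q : ℝ) ^ (-σ)
        linarith
      have hN := siftedSet_ncard_le (insert p s) (a := a) (X := X) (by linarith)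
      have hN0 : (0 : ℝ) ≤ (siftedSet (insert p s) a X).ncard := by positivity
      have hA : 1 ≤ X ^ σ * Y ^ (1 - σ) := by linarith
      have hB : 2 * (X ^ σ * Y ^ (1 - σ)) ≤
          2 * (X ^ σ * Y ^ (1 - σ)) * ∏ p ∈ insert p s, (1 + (p : ℝ) ^ (-σ)) :=
        le_mul_of_one_le_right (by linarith) hR
      refine le_trans ?_ hB
      rw [abs_le]
      constructor <;> nlinarith
    · rw [siftedSet_insert hp.1 (fun q hq => (hs' q hq).1) hps, Finset.prod_insert hps,
        Finset.prod_insert hps]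
      have e1 := ih hs' X a hX hY
      have e2 := ih hs' (X / p) (a / p) ((one_le_div hp0).2 (hp.2.trans hXY)) hY
      rw [Real.div_rpow (by linarith) hp0.le, div_eq_mul_inv (X ^ σ), ← Real.rpow_neg hp0.le] at e2
      rw [abs_le] at e1 e2 ⊢
      have k : X / p * ∏ p ∈ s, (1 - 1 / (p : ℝ)) = X * (1 / p * ∏ p ∈ s, (1 - 1 / (p : ℝ))) := by
        ring
      rw [k] at e2
      constructor <;> linarith

/-! ### Rankin's product over primes -/

/-- Summation by parts: `∑_{p ≤ N} p ^ (η - 1) log p ≪ N ^ η / η`, from Chebyshev's bound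
`θ(n) ≤ n log 4`. The last term on the right makes the induction on `N` go through. -/
lemma sum_log_mul_rpow_aux {η : ℝ} (h0 : 0 < η) (h1 : η ≤ 1) (N : ℕ) :
    ∑ p ∈ Nat.primesLE (N + 1), Real.log p * (p : ℝ) ^ (η - 1) ≤
      Real.log 4 * ((N + 1 : ℝ) ^ η / η)
        + (Chebyshev.theta (N + 1 : ℕ) - Real.log 4 * (N + 1)) * ((N + 1 : ℝ) ^ (η - 1)) := by
  have hl4 : 0 < Real.log 4 := Real.log_pos (by norm_num)
  induction N with
  | zero =>
    simp [Chebyshev.theta_one]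
    have : 1 ≤ η⁻¹ := (one_le_inv₀ h0).2 h1
    nlinarith
  | succ N ih =>
    have hc := Chebyshev.theta_le_log4_mul_x (x := ((N + 1 : ℕ) : ℝ)) (by positivity)
    have hmono : ((N + 1 : ℕ) + 1 : ℝ) ^ (η - 1) ≤ (N + 1 : ℝ) ^ (η - 1) :=
      Real.rpow_le_rpow_of_nonpos (by positivity) (by push_cast; linarith) (by linarith)
    -- Bernoulli's inequality for the concave function `t ↦ t ^ η`
    have hbern : η * ((N + 1 : ℕ) + 1 : ℝ) ^ (η - 1) ≤
        ((N + 1 : ℕ) + 1 : ℝ) ^ η - (N + 1 : ℝ) ^ η := by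
      have hM : (0 : ℝ) < (N + 1 : ℕ) + 1 := by positivity
      have hb := rpow_one_add_le_one_add_mul_self
        (s := -(1 / ((N + 1 : ℕ) + 1 : ℝ))) (p := η) (by
          rw [neg_le_neg_iff, div_le_one hM]; push_cast; linarith [N.cast_nonneg (α := ℝ)]) h0.le h1
      have e : (N + 1 : ℝ) = ((N + 1 : ℕ) + 1 : ℝ) * (1 + -(1 / ((N + 1 : ℕ) + 1 : ℝ))) := by
        field_simp; push_cast; ring
      have hnn : (0 : ℝ) ≤ 1 + -(1 / ((N + 1 : ℕ) + 1 : ℝ)) := by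
        have : 1 / ((N + 1 : ℕ) + 1 : ℝ) ≤ 1 := by
          rw [div_le_one hM]; push_cast; linarith [N.cast_nonneg (α := ℝ)]
        linarith
      rw [e, Real.mul_rpow hM.le hnn, Real.rpow_sub_one hM.ne']
      have hMη : (0 : ℝ) ≤ ((N + 1 : ℕ) + 1 : ℝ) ^ η := by positivity
      have := mul_le_mul_of_nonneg_left hb hMη
      have e2 : ((N + 1 : ℕ) + 1 : ℝ) ^ η * (1 + η * -(1 / ((N + 1 : ℕ) + 1 : ℝ))) =
        ((N + 1 : ℕ) + 1 : ℝ) ^ η - η * (((N + 1 : ℕ) + 1 : ℝ) ^ η / ((N + 1 : ℕ) + 1 : ℝ)) := by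
        field_simp
        ring
      linarith
    have hdiv : ((N + 1 : ℕ) + 1 : ℝ) ^ (η - 1) ≤
        ((N + 1 : ℕ) + 1 : ℝ) ^ η / η - (N + 1 : ℝ) ^ η / η := by
      rw [← sub_div, le_div_iff₀ h0]; linarith
    have hcomm : (Chebyshev.theta (N + 1 : ℕ) - Real.log 4 * (N + 1)) * ((N + 1 : ℝ) ^ (η - 1)) ≤
        (Chebyshev.theta (N + 1 : ℕ) - Real.log 4 * (N + 1)) *
          (((N + 1 : ℕ) + 1 : ℝ) ^ (η - 1)) :=
      mul_le_mul_of_nonpos_left hmono (by push_cast at hc ⊢; linarith)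
    have hstep : ∑ p ∈ Nat.primesLE (N + 1 + 1), Real.log p * (p : ℝ) ^ (η - 1) =
        ∑ p ∈ Nat.primesLE (N + 1), Real.log p * (p : ℝ) ^ (η - 1) +
        (Chebyshev.theta (N + 1 + 1 : ℕ) - Chebyshev.theta (N + 1 : ℕ)) *
          (((N + 1 : ℕ) + 1 : ℝ) ^ (η - 1)) := by
      rw [Chebyshev.theta_eq_sum_primesLE_log, Chebyshev.theta_eq_sum_primesLE_log,
        Nat.primesLE_succ (N + 1)]
      split_ifs with hpr
      · rw [Finset.sum_insert (Nat.notMem_primesLE _), Finset.sum_insert (Nat.notMem_primesLE _)]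
        push_cast; ring
      · ring
    rw [hstep]
    have := mul_le_mul_of_nonneg_left hdiv hl4.le
    push_cast at *
    linarith

lemma sum_log_mul_rpow {η y : ℝ} (h0 : 0 < η) (h1 : η ≤ 1) (hy : 2 < y) :
    ∑ p ∈ Nat.primesLE ⌊y⌋₊, Real.log p * (p : ℝ) ^ (η - 1) ≤ Real.log 4 * (y ^ η / η) := by
  have hf : 1 ≤ ⌊y⌋₊ := Nat.le_floor (by push_cast; linarith)
  obtain ⟨N, hN⟩ := Nat.exists_eq_add_of_le' hf
  have hNy : (N + 1 : ℝ) ≤ y := by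
    have := Nat.floor_le (a := y) (by linarith)
    rw [hN] at this; exact_mod_cast this
  have h := sum_log_mul_rpow_aux h0 h1 N
  rw [hN]
  have hc := Chebyshev.theta_le_log4_mul_x (x := ((N + 1 : ℕ) : ℝ)) (by positivity)
  have h2 : (Chebyshev.theta (N + 1 : ℕ) - Real.log 4 * (N + 1)) * ((N + 1 : ℝ) ^ (η - 1)) ≤ 0 :=
    mul_nonpos_of_nonpos_of_nonneg (by push_cast at hc ⊢; linarith) (by positivity)
  have h3 : Real.log 4 * ((N + 1 : ℝ) ^ η / η) ≤ Real.log 4 * (y ^ η / η) := by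
    have : 0 ≤ Real.log 4 := Real.log_nonneg (by norm_num)
    gcongr
  linarith

/-- The partial Euler product of `ζ (1 + α)` is at most `ζ (1 + α) ≤ 1 + 1 / α`. -/
lemma prod_le_zeta {α : ℝ} (hα : 0 < α) (n : ℕ) :
    ∏ p ∈ Nat.primesLE n, (1 + (p : ℝ) ^ (-(1 + α))) ≤ 1 + 1 / α := by
  set f : ℕ →* ℝ :=
    { toFun := fun m => (m : ℝ) ^ (-(1 + α))
      map_one' := by simp
      map_mul' := fun a b => by
        push_cast; exact Real.mul_rpow (Nat.cast_nonneg _) (Nat.cast_nonneg _) } with hf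
  have hfa : ∀ m : ℕ, f m = (m : ℝ) ^ (-(1 + α)) := fun _ => rfl
  have hfn : ∀ m : ℕ, 0 ≤ f m := fun m => by rw [hfa]; positivity
  have hsum : Summable f := by
    have : Summable fun m : ℕ => (m : ℝ) ^ (-(1 + α)) := Real.summable_nat_rpow.2 (by linarith)
    exact this
  have h1 := EulerProduct.prod_primesBelow_geometric_eq_tsum_smoothNumbers hsum (n + 1)
  have h2 : ∏ p ∈ Nat.primesLE n, (1 + (p : ℝ) ^ (-(1 + α))) ≤
      ∏ p ∈ (n + 1).primesBelow, (1 - f p)⁻¹ := by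
    refine Finset.prod_le_prod (fun p _ => by positivity) fun p hp => ?_
    have hlt : f p < 1 := by
      rw [hfa]
      exact Real.rpow_lt_one_of_one_lt_of_neg
        (by exact_mod_cast Nat.one_lt_of_mem_primesLE hp) (by linarith)
    rw [← hfa, ← one_div, le_div_iff₀ (by linarith)]
    nlinarith [sq_nonneg (f p)]
  have h3 : ∑' m : (n + 1).smoothNumbers, f m ≤ ∑' m, f m :=
    hsum.tsum_subtype_le (fun m => f m) _ (fun m => hfn m)
  have h4 : ∑' m, f m = ∑' m : ℕ, 1 / (m + 1 : ℝ) ^ (1 + α) := by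
    rw [hsum.tsum_eq_zero_add]
    have : f 0 = 0 := by
      rw [hfa, Nat.cast_zero, Real.zero_rpow (by linarith)]
    rw [this, zero_add]
    congr 1; ext m
    rw [hfa, Real.rpow_neg (Nat.cast_nonneg _)]; simp
  have h5 := ZetaAsymptotics.zeta_limit_aux1 (s := 1 + α) (by linarith)
  have h6 : 0 ≤ ZetaAsymptotics.termTSum (1 + α) :=
    tsum_nonneg fun m => ZetaAsymptotics.term_nonneg (m + 1) (1 + α)
  have h7 : 0 ≤ (1 + α) * ZetaAsymptotics.termTSum (1 + α) := by positivity
  have e : 1 + α - 1 = α := by ring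
  rw [e] at h5
  linarith

/-- The product in Rankin's bound, compared with a partial Euler product at `1 + 1 / log y`. -/
lemma prod_rankin {η y : ℝ} (h0 : 0 < η) (h1 : η ≤ 1) (hy : 2 < y) (hη : 1 / Real.log y ≤ 3 * η) :
    ∏ p ∈ Nat.primesLE ⌊y⌋₊, (1 + (p : ℝ) ^ (-(1 - η))) ≤
      (1 + Real.log y) * Real.exp (6 * y ^ η) := by
  have hly : 0 < Real.log y := Real.log_pos (by linarith)
  set α := 1 / Real.log y with hα
  have hα0 : 0 < α := by positivity
  have hl4 : Real.log 4 ≤ 1.4 := by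
    rw [show (4 : ℝ) = 2 ^ 2 by norm_num, Real.log_pow]
    have := Real.log_two_lt_d9; push_cast; linarith
  have hterm : ∀ p ∈ Nat.primesLE ⌊y⌋₊, (1 + (p : ℝ) ^ (-(1 - η))) ≤
      (1 + (p : ℝ) ^ (-(1 + α))) *
        Real.exp ((η + α) * (Real.log p * (p : ℝ) ^ (η - 1))) := by
    intro p hp
    have hp1 : (1 : ℝ) < p := by exact_mod_cast Nat.one_lt_of_mem_primesLE hp
    have hp0 : (0 : ℝ) < p := by linarith
    set A := (p : ℝ) ^ (η - 1) with hA
    set B := (p : ℝ) ^ (-(1 + α)) with hB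
    have hA0 : 0 < A := by positivity
    have hB0 : 0 < B := by positivity
    rw [show -(1 - η) = η - 1 by ring, ← hA]
    have hBA : B = A * Real.exp (-((η + α) * Real.log p)) := by
      rw [hA, hB, Real.rpow_def_of_pos hp0, Real.rpow_def_of_pos hp0, ← Real.exp_add]
      congr 1; ring
    have hd : A - B ≤ (η + α) * (Real.log p * A) := by
      have := Real.add_one_le_exp (-((η + α) * Real.log p))
      rw [hBA]; nlinarith
    have hE := Real.add_one_le_exp ((η + α) * (Real.log p * A))
    have hnn : 0 ≤ (η + α) * (Real.log p * A) := by
      have := Real.log_pos hp1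
      positivity
    nlinarith [mul_nonneg hB0.le hnn]
  calc _ ≤ ∏ p ∈ Nat.primesLE ⌊y⌋₊, ((1 + (p : ℝ) ^ (-(1 + α))) *
        Real.exp ((η + α) * (Real.log p * (p : ℝ) ^ (η - 1)))) :=
        Finset.prod_le_prod (fun p _ => by positivity) hterm
    _ = (∏ p ∈ Nat.primesLE ⌊y⌋₊, (1 + (p : ℝ) ^ (-(1 + α)))) *
        Real.exp ((η + α) * ∑ p ∈ Nat.primesLE ⌊y⌋₊, Real.log p * (p : ℝ) ^ (η - 1)) := by
        rw [Finset.prod_mul_distrib, ← Real.exp_sum, Finset.mul_sum]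
    _ ≤ (1 + 1 / α) * Real.exp (6 * y ^ η) := by
        refine mul_le_mul (prod_le_zeta hα0 _) ?_ (by positivity) (by positivity)
        rw [Real.exp_le_exp]
        have hyη : 0 < y ^ η := by positivity
        calc (η + α) * ∑ p ∈ Nat.primesLE ⌊y⌋₊, Real.log p * (p : ℝ) ^ (η - 1)
            ≤ (η + 3 * η) * (1.4 * (y ^ η / η)) := by
              have hs := sum_log_mul_rpow h0 h1 hy
              have : Real.log 4 * (y ^ η / η) ≤ 1.4 * (y ^ η / η) := by gcongr
              refine (mul_le_mul_of_nonneg_left (hs.trans this) (by positivity)).trans ?_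
              gcongr
          _ = 5.6 * y ^ η := by field_simp; norm_num
          _ ≤ 6 * y ^ η := by linarith
    _ = _ := by rw [hα, one_div_one_div]

/-! ### The choice of the exponent -/

theorem sieve_interval (ε δ : ℝ) (hε : 0 < ε) (hδ : 0 < δ) :
    ∃ u₀ K : ℝ, 0 < K ∧
      ∀ X y : ℝ, y < X → 2 < y → u₀ ≤ Real.log X / Real.log y →
        ∀ a : ℝ,
          |(({z : ℤ | a < (z : ℝ) ∧ (z : ℝ) ≤ a + X ∧
                ∀ p : ℕ, p.Prime → (p : ℝ) ≤ y → ¬ ((p : ℤ) ∣ z)}.ncard : ℝ)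
              - X * ∏ p ∈ Finset.filter Nat.Prime (Finset.Iic ⌊y⌋₊), (1 - 1 / (p : ℝ)))|
            ≤ K * X * Real.log y *
                Real.exp (-(1 - δ) * (Real.log X / Real.log y) *
                  Real.log (Real.log X / Real.log y))
              + K * X ^ ε := by
  -- `1 - e / 2` below has to stay bounded away from `0`, so `ε` is capped at `1`
  obtain ⟨e, he0, he1, heε⟩ : ∃ e : ℝ, 0 < e ∧ e ≤ 1 ∧ e ≤ ε :=
    ⟨min ε 1, by positivity, min_le_right _ _, min_le_left _ _⟩
  refine ⟨max (Real.exp 1) (max (Real.exp (7 / δ)) (8 / e)),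
    6 + 2 * Real.exp (6 * Real.exp (24 / e)), by positivity, ?_⟩
  intro X y hyX hy hu a
  set u := Real.log X / Real.log y with hu_def
  have hu1 : Real.exp 1 ≤ u := (le_max_left _ _).trans hu
  have hu2 : Real.exp (7 / δ) ≤ u := (le_max_left _ _).trans ((le_max_right _ _).trans hu)
  have hu3 : 8 / e ≤ u := (le_max_right _ _).trans ((le_max_right _ _).trans hu)
  have hly : 0 < Real.log y := Real.log_pos (by linarith)
  have hly2 : 0.69 < Real.log y := by
    have := Real.log_two_gt_d9
    have := Real.log_lt_log (by norm_num) hy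
    linarith
  have hu0 : 0 < u := (Real.exp_pos 1).trans_le hu1
  have hlu1 : 1 ≤ Real.log u := (Real.le_log_iff_exp_le hu0).2 hu1
  have hlu2 : 7 / δ ≤ Real.log u := (Real.le_log_iff_exp_le hu0).2 hu2
  have hX0 : 0 < X := by linarith
  have hy0 : 0 < y := by linarith
  have hlX : Real.log X = u * Real.log y := by rw [hu_def]; field_simp
  have hset : {z : ℤ | a < (z : ℝ) ∧ (z : ℝ) ≤ a + X ∧
      ∀ p : ℕ, p.Prime → (p : ℝ) ≤ y → ¬ ((p : ℤ) ∣ z)} = siftedSet (Nat.primesLE ⌊y⌋₊) a X := by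
    ext z
    simp only [siftedSet, Set.mem_ofPred_eq, Nat.mem_primesLE, Nat.le_floor_iff hy0.le]
    exact and_congr_right fun _ => and_congr_right fun _ =>
      ⟨fun h p hp => h p hp.2 hp.1, fun h p hp hpy => h p ⟨hpy, hp⟩⟩
  have hprimes : Finset.filter Nat.Prime (Finset.Iic ⌊y⌋₊) = Nat.primesLE ⌊y⌋₊ := by
    ext p; simp [Nat.mem_primesLE]
  rw [hset, hprimes]
  have key : ∀ η : ℝ, 0 < η → η ≤ 1 → 1 / Real.log y ≤ 3 * η →
      |((siftedSet (Nat.primesLE ⌊y⌋₊) a X).ncard : ℝ)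
        - X * ∏ p ∈ Nat.primesLE ⌊y⌋₊, (1 - 1 / (p : ℝ))| ≤
      2 * (X ^ (1 - η) * y ^ η) * ((1 + Real.log y) * Real.exp (6 * y ^ η)) := by
    intro η h0 h1 hη
    have h := sieve_bound (σ := 1 - η) (Y := y) (by linarith) (by linarith) (Nat.primesLE ⌊y⌋₊)
      (fun p hp => ⟨Nat.prime_of_mem_primesLE hp,
        (Nat.le_floor_iff hy0.le).1 (Nat.le_of_mem_primesLE hp)⟩) X a (by linarith) (by linarith)
    rw [show 1 - (1 - η) = η by ring] at h
    exact h.trans (mul_le_mul_of_nonneg_left (prod_rankin h0 h1 hy hη) (by positivity))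
  have hL : 0 ≤ 2 * Real.exp (6 * Real.exp (24 / e)) := by positivity
  set L := 2 * Real.exp (6 * Real.exp (24 / e)) with hLdef
  -- `η = log u / log y` makes `y ^ η = u`, but is admissible only if `1 - η` is not too small
  rcases le_or_gt (Real.log u / Real.log y) (1 - e / 2) with hcase | hcase
  · have h := key (Real.log u / Real.log y) (by positivity) (by linarith) (by
      rw [mul_div_assoc', div_le_div_iff_of_pos_right hly]; linarith)
    have hyη : y ^ (Real.log u / Real.log y) = u := by
      rw [Real.rpow_def_of_pos hy0, mul_div_cancel₀ _ hly.ne', Real.exp_log hu0]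
    have hXη : X ^ (1 - Real.log u / Real.log y) = X * Real.exp (-(u * Real.log u)) := by
      rw [Real.rpow_sub hX0, Real.rpow_one, Real.rpow_def_of_pos hX0, hlX, Real.exp_neg,
        ← div_eq_mul_inv]
      congr 2; field_simp
    rw [hyη, hXη] at h
    have hexp : Real.exp (-(u * Real.log u)) * u * Real.exp (6 * u) ≤
        Real.exp (-(1 - δ) * u * Real.log u) := by
      conv_lhs => enter [1, 2]; rw [← Real.exp_log hu0]
      rw [← Real.exp_add, ← Real.exp_add, Real.exp_le_exp]
      have h1 : Real.log u ≤ u := by have := Real.log_le_sub_one_of_pos hu0; linarith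
      have h2 : 7 ≤ δ * Real.log u := by rw [div_le_iff₀ hδ] at hlu2; linarith
      nlinarith
    have hR : 0 ≤ (6 + L) * X ^ ε := by positivity
    have h3 : 2 * (X * Real.exp (-(u * Real.log u)) * u) *
        ((1 + Real.log y) * Real.exp (6 * u)) =
        2 * X * (1 + Real.log y) * (Real.exp (-(u * Real.log u)) * u * Real.exp (6 * u)) := by ring
    have h4 : 2 * X * (1 + Real.log y) ≤ (6 + L) * X * Real.log y := by
      have : 0 ≤ L * (X * Real.log y) := by positivity
      nlinarith
    rw [h3] at h
    have h5 := mul_le_mul h4 hexp (by positivity) (by positivity)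
    linarith
  · have hη0 : 0 < 1 - e / 2 := by linarith
    have h := key (1 - e / 2) hη0 (by linarith) (by
      rw [div_le_iff₀ hly]; nlinarith)
    have hyu : y ^ (1 - e / 2) ≤ u := by
      rw [lt_div_iff₀ hly] at hcase
      rw [Real.rpow_def_of_pos hy0, ← Real.le_log_iff_exp_le hu0]
      linarith
    have hyy : y ^ (1 - e / 2) ≤ y := by
      calc y ^ (1 - e / 2) ≤ y ^ (1 : ℝ) := by gcongr <;> linarith
        _ = y := Real.rpow_one y
    have hly1 : 1 + Real.log y ≤ y := by have := Real.log_le_sub_one_of_pos hy0; linarith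
    have hsq : y * y ≤ X ^ (e / 4) := by
      rw [Real.rpow_def_of_pos hX0, hlX]
      conv_lhs => rw [← Real.exp_log hy0]
      rw [← Real.exp_add, Real.exp_le_exp]
      rw [div_le_iff₀ he0] at hu3
      nlinarith
    -- for large `y` the exponent is absorbed by `X ^ (e / 4)`, for bounded `y` by the constant
    have hexp : 2 * Real.exp (6 * y ^ (1 - e / 2)) ≤ (6 + L) * X ^ (e / 4) := by
      have hX1 : 1 ≤ X ^ (e / 4) := Real.one_le_rpow (by linarith) (by positivity)
      rcases le_total (24 / e) (Real.log y) with hbig | hsmall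
      · have h1 : Real.exp (6 * y ^ (1 - e / 2)) ≤ X ^ (e / 4) := by
          rw [Real.rpow_def_of_pos hX0, hlX, Real.exp_le_exp]
          rw [div_le_iff₀ he0] at hbig
          nlinarith
        nlinarith
      · have h1 : y ≤ Real.exp (24 / e) := (Real.log_le_iff_le_exp hy0).1 hsmall
        have h2 : 2 * Real.exp (6 * y ^ (1 - e / 2)) ≤ L := by
          rw [hLdef]; gcongr; linarith
        nlinarith
    have hfin : 2 * (X ^ (1 - (1 - e / 2)) * y ^ (1 - e / 2)) *
        ((1 + Real.log y) * Real.exp (6 * y ^ (1 - e / 2))) ≤ (6 + L) * X ^ ε := by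
      calc _ = X ^ (1 - (1 - e / 2)) * (y ^ (1 - e / 2) * (1 + Real.log y)) *
            (2 * Real.exp (6 * y ^ (1 - e / 2))) := by ring
        _ ≤ X ^ (1 - (1 - e / 2)) * (X ^ (e / 4)) * ((6 + L) * X ^ (e / 4)) := by
            have := (mul_le_mul hyy hly1 (by positivity) hy0.le).trans hsq
            gcongr
        _ = (6 + L) * (X ^ (1 - (1 - e / 2)) * X ^ (e / 4) * X ^ (e / 4)) := by ring
        _ = (6 + L) * X ^ e := by
            rw [← Real.rpow_add hX0, ← Real.rpow_add hX0]; congr 2; ring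
        _ ≤ (6 + L) * X ^ ε := by gcongr; linarith
    have hR : 0 ≤ (6 + L) * X * Real.log y * Real.exp (-(1 - δ) * u * Real.log u) := by positivity
    linarith
end
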